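/- The image of the Capelli Berezinian under the Harish-Chandra homomorphism is χ_{m|n}(C_{m|n}(−T)) = (T+ℓ_1−m)⋯(T+ℓ_m−m)·(T−ℓ_{1̄}−m)^{−1}⋯(T−ℓ_{n̄}−m)^{−1}. -/

import Mathlib

set_option maxHeartbeats 1000000
set_option synthInstance.maxHeartbeats 400000

noncomputable section
open scoped TensorProduct

/-- The index set `I = {1,…,m,1̄,…,n̄}` of `gl(m|n)`; `Sum.inl` are the even
(unbarred) indices, `Sum.inr` the odd (barred) ones.  The index set
`Î = {0} ∪ I` of `gl(m+1|n)` is realized as `Ind (m+1) n`, with `0 = Sum.inl 0`. -/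
abbrev Ind (m n : ℕ) := Fin m ⊕ Fin n

/-- Parity of an index, as `0` or `1`. -/
def pI {m n : ℕ} : Ind m n → ℕ := Sum.elim (fun _ => 0) (fun _ => 1)

/-- The total order `1 < ⋯ < m < 1̄ < ⋯ < n̄` on `I` (and, with `m+1` in place of `m`,
the order `0 < 1 < ⋯ < m < 1̄ < ⋯ < n̄` on `Î`). -/
def iltI {m n : ℕ} : Ind m n → Ind m n → Prop
  | Sum.inl a, Sum.inl b => a < b
  | Sum.inl _, Sum.inr _ => True
  | Sum.inr _, Sum.inl _ => False
  | Sum.inr a, Sum.inr b => a < b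

/-- The distinguished index `0` of `Î`. -/
def z0 {m n : ℕ} : Ind (m+1) n := Sum.inl 0

/-- The inclusion `I ↪ Î`. -/
def emb {m n : ℕ} : Ind m n → Ind (m+1) n := Sum.map Fin.succ id

lemma emb_injective {m n : ℕ} : Function.Injective (emb (m := m) (n := n)) := by
  intro a b h
  cases a <;> cases b <;> simp [emb, Fin.succ_inj] at h <;> simp [h]

lemma emb_ne_z0 {m n : ℕ} (a : Ind m n) : emb a ≠ z0 := by
  cases a <;> simp [emb, z0, Fin.succ_ne_zero]

/-- Builds a linear map out of a space with basis `α` from a function on basis vectors. -/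
def mkOp {α M : Type} [AddCommGroup M] [Module ℂ M] (g : α → M) : (α →₀ ℂ) →ₗ[ℂ] M :=
  Finsupp.lsum ℂ fun x => LinearMap.toSpanSingleton ℂ M (g x)

/-- Number of odd variables occurring before position `i`. -/
def cntB {n : ℕ} (b : Fin n → Bool) (i : Fin n) : ℕ :=
  (Finset.univ.filter fun j => j < i ∧ b j = true).card

/-- Number of odd variables occurring. -/
def cntA {n : ℕ} (b : Fin n → Bool) : ℕ := (Finset.univ.filter fun j => b j = true).card


/-- The defining (super-)commutation relations of `gl`:
`e_ij e_kl − (−1)^{(|i|+|j|)(|k|+|l|)} e_kl e_ij = δ_jk e_il − (−1)^{(|i|+|j|)(|k|+|l|)} δ_li e_kj`. -/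
inductive glRel (ι : Type) (p : ι → ℕ) [DecidableEq ι] :
    FreeAlgebra ℂ (ι × ι) → FreeAlgebra ℂ (ι × ι) → Prop
  | basic (i j k l : ι) : glRel ι p
      (FreeAlgebra.ι ℂ (i, j) * FreeAlgebra.ι ℂ (k, l)
        - ((-1 : ℂ) ^ ((p i + p j) * (p k + p l))) •
            (FreeAlgebra.ι ℂ (k, l) * FreeAlgebra.ι ℂ (i, j)))
      ((if j = k then FreeAlgebra.ι ℂ (i, l) else 0)
        - ((-1 : ℂ) ^ ((p i + p j) * (p k + p l))) •
            (if l = i then FreeAlgebra.ι ℂ (k, j) else 0))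

/-- The universal enveloping superalgebra of the general linear Lie superalgebra with
index set `ι` and parity `p`, presented by generators `e_ij` and the super-commutator
relations. -/
abbrev UEA (ι : Type) (p : ι → ℕ) [DecidableEq ι] : Type := RingQuot (glRel ι p)

/-- The generator `e_ij` of `UEA ι p`. -/
def gen {ι : Type} (p : ι → ℕ) [DecidableEq ι] (i j : ι) : UEA ι p :=
  RingQuot.mkAlgHom ℂ (glRel ι p) (FreeAlgebra.ι ℂ (i, j))

/-- Monomials of the `D'(m|n)`-module `F_a`: such a monomial
`t_0^{a−k_1−⋯−k_{n̄}} t_1^{k_1}⋯t_m^{k_m} t_{1̄}^{k_{1̄}}⋯t_{n̄}^{k_{n̄}}` is determined by the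
exponents `(k_1,…,k_m,k_{1̄},…,k_{n̄})`. -/
abbrev FaMon (m n : ℕ) := (Fin m → ℕ) × (Fin n → Bool)

/-- The module `F_a`, as the vector space with basis its monomials. -/
abbrev FaSp (m n : ℕ) : Type := FaMon m n →₀ ℂ

/-- A basis monomial of `F_a`. -/
def amono {m n : ℕ} (x : FaMon m n) : FaSp m n := Finsupp.single x 1

/-- The parity of a monomial of `F_a`. -/
def parM {m n : ℕ} (x : FaMon m n) : ℕ := cntA x.2

/-- The monomial `t_0^a` of `F_a`. -/
def hwMon (m n : ℕ) : FaMon m n := (fun _ => 0, fun _ => false)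

/-- Multiplication by `t_i/t_0` on `F_a`, even `i`. -/
def aDivE {m n : ℕ} (i : Fin m) : Module.End ℂ (FaSp m n) :=
  mkOp fun x => amono (Function.update x.1 i (x.1 i + 1), x.2)

/-- Multiplication by `t_ī/t_0` on `F_a`, odd `ī`. -/
def aDivO {m n : ℕ} (i : Fin n) : Module.End ℂ (FaSp m n) :=
  mkOp fun x => if x.2 i then 0 else
    ((-1 : ℂ) ^ (cntB x.2 i)) • amono (x.1, Function.update x.2 i true)

/-- The operator `t_0∂_0` on `F_a` (the exponent of `t_0` is `a` minus the total degree of the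
other variables). -/
def aPar0 {m n : ℕ} (a : ℂ) : Module.End ℂ (FaSp m n) :=
  mkOp fun x => (a - (∑ i, (x.1 i : ℂ)) - (cntA x.2 : ℂ)) • amono x

/-- The operator `t_0∂_i` on `F_a`, even `i`. -/
def aParE {m n : ℕ} (i : Fin m) : Module.End ℂ (FaSp m n) :=
  mkOp fun x => (x.1 i : ℂ) • amono (Function.update x.1 i (x.1 i - 1), x.2)

/-- The operator `t_0∂_ī` on `F_a`, odd `ī`. -/
def aParO {m n : ℕ} (i : Fin n) : Module.End ℂ (FaSp m n) :=
  mkOp fun x => if x.2 i then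
    ((-1 : ℂ) ^ (cntB x.2 i)) • amono (x.1, Function.update x.2 i false) else 0

/-- `t_i/t_0` on `F_a` for `i ∈ I`. -/
def aDiv {m n : ℕ} : Ind m n → Module.End ℂ (FaSp m n) := Sum.elim aDivE aDivO

/-- `t_0∂_i` on `F_a` for `i ∈ Î`. -/
def aParB {m n : ℕ} (a : ℂ) : Ind (m+1) n → Module.End ℂ (FaSp m n) :=
  Sum.elim (Fin.cases (aPar0 a) aParE) aParO

/-- `t_i/t_0` on `F_a` for `i ∈ Î`. -/
def aDivB {m n : ℕ} : Ind (m+1) n → Module.End ℂ (FaSp m n) :=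
  Sum.elim (Fin.cases 1 aDivE) aDivO

/-- The operator `t_i∂_j` on `F_a`, `i, j ∈ Î`. -/
def aTD {m n : ℕ} (a : ℂ) (i j : Ind (m+1) n) : Module.End ℂ (FaSp m n) :=
  aDivB i * aParB a j

/-- The simple highest weight module `L(λ)` over `U(gl(m|n))`: a simple module with a
(nonzero) highest weight vector of weight `λ`. -/
structure SimpleHW (m n : ℕ) (lam : Ind m n → ℂ) where
  L : Type
  [acg : AddCommGroup L]
  [mod : Module ℂ L]
  ρ : UEA (Ind m n) pI →ₐ[ℂ] Module.End ℂ L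
  v : L
  v_ne : v ≠ 0
  hw : ∀ i j : Ind m n, iltI i j → ρ (gen pI i j) v = 0
  hwt : ∀ i : Ind m n, ρ (gen pI i i) v = lam i • v
  simple : ∀ N : Submodule ℂ L, (∀ u x, x ∈ N → ρ u x ∈ N) → N = ⊥ ∨ N = ⊤

attribute [instance] SimpleHW.acg SimpleHW.mod

/-- The Verma module `M(λ)` over `U(gl(m|n))`: a module generated by a highest weight vector
of weight `λ` which is universal among such. -/
structure VermaM (m n : ℕ) (lam : Ind m n → ℂ) where
  L : Type
  [acg : AddCommGroup L]
  [mod : Module ℂ L]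
  ρ : UEA (Ind m n) pI →ₐ[ℂ] Module.End ℂ L
  v : L
  v_ne : v ≠ 0
  hw : ∀ i j : Ind m n, iltI i j → ρ (gen pI i j) v = 0
  hwt : ∀ i : Ind m n, ρ (gen pI i i) v = lam i • v
  gens : ∀ N : Submodule ℂ L, (∀ u x, x ∈ N → ρ u x ∈ N) → v ∈ N → N = ⊤
  univ : ∀ (W : Type) [AddCommGroup W] [Module ℂ W]
      (ρW : UEA (Ind m n) pI →ₐ[ℂ] Module.End ℂ W) (w : W),
      (∀ i j : Ind m n, iltI i j → ρW (gen pI i j) w = 0) →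
      (∀ i : Ind m n, ρW (gen pI i i) w = lam i • w) →
      ∃ g : L →ₗ[ℂ] W, g v = w ∧ ∀ u x, g (ρ u x) = ρW u (g x)

attribute [instance] VermaM.acg VermaM.mod

/-- The predicate expressing that `Θ` is the representation of `U(gl(m+1|n))` on
`F_a ⊗ L` obtained via `φ_R` from a representation `ρ` of `U(gl(m|n))` on `L`, where the
central element `R` acts by the scalar `r`; the formulas for the action of the generators on
pure tensors (with the appropriate Koszul signs) are written out explicitly. -/
def IsTensorRep {m n : ℕ} (a r : ℂ) {L : Type} [AddCommGroup L] [Module ℂ L]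
    (ρ : UEA (Ind m n) pI →ₐ[ℂ] Module.End ℂ L)
    (Θ : UEA (Ind (m+1) n) pI →ₐ[ℂ] Module.End ℂ (FaSp m n ⊗[ℂ] L)) : Prop :=
  (∀ (c d : Ind m n) (x : FaMon m n) (v : L),
    Θ (gen pI (emb c) (emb d)) (amono x ⊗ₜ[ℂ] v) =
      (aTD a (emb c) (emb d)) (amono x) ⊗ₜ[ℂ] v
      + ((-1 : ℂ) ^ ((pI c + pI d) * parM x)) • (amono x ⊗ₜ[ℂ] (ρ (gen pI c d) v))
      + (if c = d then (((-1 : ℂ) ^ (pI c * pI d)) * r) • (amono x ⊗ₜ[ℂ] v) else 0)) ∧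
  (∀ (c : Ind m n) (x : FaMon m n) (v : L),
    Θ (gen pI (emb c) z0) (amono x ⊗ₜ[ℂ] v) =
      (aTD a (emb c) z0) (amono x) ⊗ₜ[ℂ] v
      - ∑ j : Ind m n, (((-1 : ℂ) ^ (pI c * pI j)) * ((-1 : ℂ) ^ ((pI c + pI j) * parM x))) •
          ((aDiv j (amono x)) ⊗ₜ[ℂ] (ρ (gen pI c j) v))) ∧
  (∀ (d : Ind m n) (x : FaMon m n) (v : L),
    Θ (gen pI z0 (emb d)) (amono x ⊗ₜ[ℂ] v) = (aTD a z0 (emb d)) (amono x) ⊗ₜ[ℂ] v) ∧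
  (∀ (x : FaMon m n) (v : L),
    Θ (gen pI z0 z0) (amono x ⊗ₜ[ℂ] v) =
      (aTD a z0 z0) (amono x) ⊗ₜ[ℂ] v + r • (amono x ⊗ₜ[ℂ] v))

/-- The shifted weight `λ̃ = (a+r, λ_1+r, …, λ_m+r, λ_{1̄}−r, …, λ_{n̄}−r)`. -/
def lamTilde {m n : ℕ} (a r : ℂ) (lam : Ind m n → ℂ) : Ind (m+1) n → ℂ :=
  Sum.elim (Fin.cases (a + r) fun k => lam (Sum.inl k) + r) fun k => lam (Sum.inr k) - r

/-- The Weyl vector `ρ_{m|n} = (m, m−1, …, 1, −1, −2, …, −n)`. -/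
def rhoS {m n : ℕ} : Ind m n → ℂ := Sum.elim (fun k => (m : ℂ) - k) fun k => -(k : ℂ) - 1

/-- Antidominance of a weight of `gl(m|n)`:
`⟨λ+ρ, α^∨⟩ ∉ ℤ_{>0}` for all positive even roots `α`. -/
def Antidom {m n : ℕ} (lam : Ind m n → ℂ) : Prop :=
  (∀ i j : Fin m, i < j → ¬∃ N : ℕ,
    (lam (Sum.inl i) + rhoS (m:=m) (n:=n) (Sum.inl i)) - (lam (Sum.inl j) + rhoS (m:=m) (n:=n) (Sum.inl j)) = (N : ℂ) + 1) ∧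
  (∀ i j : Fin n, i < j → ¬∃ N : ℕ,
    (lam (Sum.inr i) + rhoS (m:=m) (n:=n) (Sum.inr i)) - (lam (Sum.inr j) + rhoS (m:=m) (n:=n) (Sum.inr j)) = (N : ℂ) + 1)

/-- Typicality of a weight of `gl(m|n)`:
`(λ+ρ, α) ≠ 0` for all positive odd isotropic roots `α = δ_i − ε_j`. -/
def Typical {m n : ℕ} (lam : Ind m n → ℂ) : Prop :=
  ∀ (i : Fin m) (j : Fin n),
    (lam (Sum.inl i) + rhoS (m:=m) (n:=n) (Sum.inl i)) + (lam (Sum.inr j) + rhoS (m:=m) (n:=n) (Sum.inr j)) ≠ 0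

/-- The algebra of Laurent-type series in `T` with coefficients in `A`: Hahn series over `ℤ`,
where the exponent `k` records the power `T^{-k}` (so that supports of honest Laurent series
in `T^{-1}`, with finitely many positive powers of `T`, are well-ordered). -/
abbrev TSer (A : Type) [Ring A] := HahnSeries ℤ A

/-- The variable `T`. -/
def Tv {A : Type} [Ring A] : TSer A := HahnSeries.single (-1 : ℤ) (1 : A)

/-- The matrix `𝔈 = ((−1)^{|i|} e_{ij})_{i,j∈I}` with entries in `A`, as a matrix of constant
series. -/
def scrE (m n : ℕ) {A : Type} [Ring A] [Algebra ℂ A] (e : Ind m n → Ind m n → A) :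
    Matrix (Ind m n) (Ind m n) (TSer A) :=
  fun i j => HahnSeries.C (((-1 : ℂ) ^ (pI i)) • e i j)

/-- The Capelli Berezinian
`C_{m|n}(v) = Det[(𝔈−v−i+1)_{ij}]_{i,j≤m} ⬝ Det[((𝔈−v−m+i)^{−1})^{st}_{ij}]_{m<i,j≤m+n}`
of the matrix `E`, evaluated at the series `v`.  Here `Det` denotes the column determinant
`Σ_σ sgn(σ) X_{σ(1),1}⋯X_{σ(N),N}`, matrix inverses are taken in the matrix ring over the
Laurent series algebra (via `Ring.inverse`), and the supertransposition signs
`(−1)^{|i|(|j|+1)}` are equal to `1` on the odd-odd block. -/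
def capelli {m n : ℕ} {A : Type} [Ring A] [Algebra ℂ A]
    (E : Matrix (Ind m n) (Ind m n) (TSer A)) (v : TSer A) : TSer A :=
  (∑ σ : Equiv.Perm (Fin m), ((Equiv.Perm.sign σ : ℤˣ) : ℤ) •
      (List.ofFn fun t : Fin m =>
        E (Sum.inl (σ t)) (Sum.inl t)
          - (if σ t = t then v + (((t : ℕ) : ℂ) • 1) else 0)).prod)
  * (∑ τ : Equiv.Perm (Fin n), ((Equiv.Perm.sign τ : ℤˣ) : ℤ) •
      (List.ofFn fun t : Fin n =>
        (Ring.inverse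
          (E - (v + ((((m : ℂ) - ((t : ℕ) : ℂ)) - 1) • 1)) •
            (1 : Matrix (Ind m n) (Ind m n) (TSer A))))
          (Sum.inr t) (Sum.inr (τ t))).prod)

set_option linter.unusedVariables false
set_option linter.unusedSimpArgs false
/-- parity 0/1 -/
def GLrel {R κ : Type} [Ring R] [DecidableEq κ] (p : κ → ℕ) (e : κ → κ → R) : Prop :=
  ∀ i j k l, e i j * e k l - (-1 : R) ^ ((p i + p j) * (p k + p l)) * (e k l * e i j)
    = (if j = k then e i l else 0) - (-1 : R) ^ ((p i + p j) * (p k + p l)) * (if l = i then e k j else 0)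

def Emat {R κ : Type} [Ring R] (p : κ → ℕ) (e : κ → κ → R) : Matrix κ κ R :=
  fun i j => (-1 : R) ^ (p i) * e i j

def RTT {R κ : Type} [Ring R] (p : κ → ℕ) (X X' : Matrix κ κ R) : Prop :=
  ∀ i j k l, X i j * X' k l - (-1 : R) ^ (p i * p j + p i * p k + p j * p k) * (X k j * X' i l)
    = (-1 : R) ^ ((p i + p j) * (p k + p l)) * (X' k l * X i j)
      - (-1 : R) ^ (p i * p j + p i * p k + p j * p k) * (X' k j * X i l)

lemma sgn_comm {R : Type} [Ring R] (n : ℕ) (x : R) : x * (-1 : R) ^ n = (-1 : R) ^ n * x :=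
  ((Commute.neg_one_right x).pow_right n).eq

lemma Emat_rel {R κ : Type} [Ring R] [DecidableEq κ] (p : κ → ℕ) (hp : ∀ i, p i = 0 ∨ p i = 1)
    (e : κ → κ → R) (he : GLrel p e) (i j k l : κ) :
    Emat p e i j * Emat p e k l - (-1 : R) ^ ((p i + p j) * (p k + p l)) * (Emat p e k l * Emat p e i j)
    = (-1 : R) ^ (p i * p j + p i * p k + p j * p k) *
      ((if k = j then Emat p e i l else 0) - (if i = l then Emat p e k j else 0)) := by
  have h := he i j k l
  have h1 : Emat p e i j * Emat p e k l - (-1 : R) ^ ((p i + p j) * (p k + p l)) * (Emat p e k l * Emat p e i j)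
    = (-1 : R) ^ (p i + p k) * ((if j = k then e i l else 0) - (-1 : R) ^ ((p i + p j) * (p k + p l)) * (if l = i then e k j else 0)) := by
    rw [← h]
    simp only [Emat]
    rcases hp i with hi | hi <;> rcases hp j with hj | hj <;> rcases hp k with hk | hk <;>
      rcases hp l with hl | hl <;> simp [hi, hj, hk, hl, pow_succ] <;> try abel
  rw [h1]
  simp only [Emat, eq_comm (a := k), eq_comm (a := i)]
  by_cases hjk : j = k <;> by_cases hli : l = i
  · subst hjk; subst hli
    rcases hp l with hi | hi <;> rcases hp j with hj | hj <;> simp [hi, hj, pow_succ] <;> try abel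
  · subst hjk
    rcases hp i with hi | hi <;> rcases hp j with hj | hj <;> simp [hi, hj, hli, pow_succ]
  · subst hli
    rcases hp l with hi | hi <;> rcases hp j with hj | hj <;> rcases hp k with hk | hk <;> simp [hi, hj, hk, hjk, pow_succ]
  · simp [hjk, hli]

def Xmat {R κ : Type} [Ring R] [DecidableEq κ] (p : κ → ℕ) (e : κ → κ → R) (u : R) : Matrix κ κ R :=
  fun i j => (if i = j then u else 0) + Emat p e i j

lemma RTT_X {R κ : Type} [Ring R] [DecidableEq κ] (p : κ → ℕ) (hp : ∀ i, p i = 0 ∨ p i = 1)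
    (e : κ → κ → R) (he : GLrel p e) (u : R) (hu : ∀ x, Commute u x) :
    RTT p (Xmat p e u) (Xmat p e (u - 1)) := by
  intro i j k l
  have h := Emat_rel p hp e he i j k l
  have hs : (i = j) → (-1 : R) ^ ((p i + p j) * (p k + p l)) = 1 := by
    rintro rfl; rw [← two_mul, mul_assoc, pow_mul]; simp
  have hs' : (k = l) → (-1 : R) ^ ((p i + p j) * (p k + p l)) = 1 := by
    rintro rfl; rw [← two_mul, mul_left_comm, pow_mul]; simp
  simp only [Xmat]
  generalize (-1 : R) ^ ((p i + p j) * (p k + p l)) = ε at *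
  generalize (-1 : R) ^ (p i * p j + p i * p k + p j * p k) = θ at *
  have hue : ∀ a b, Emat p e a b * u = u * Emat p e a b := fun a b => (hu _).eq.symm
  have c1 := hue i j
  have c2 := hue k l
  have c3 := hue k j
  have c4 := hue i l
  clear hue
  generalize Emat p e i j = a at *
  generalize Emat p e k l = b at *
  generalize Emat p e k j = c at *
  generalize Emat p e i l = d at *
  have dl : ∀ x y : κ, ∃ δ : R, (∀ z, (if x = y then z else 0) = δ * z) ∧
      ((x = y ∧ δ = 1) ∨ δ = 0) := by
    intro x y
    by_cases hxy : x = y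
    · exact ⟨1, by simp [hxy], Or.inl ⟨hxy, rfl⟩⟩
    · exact ⟨0, by simp [hxy], Or.inr rfl⟩
  obtain ⟨d1, h1, H1⟩ := dl i j
  obtain ⟨d2, h2, H2⟩ := dl k l
  obtain ⟨d3, h3, H3⟩ := dl k j
  obtain ⟨d4, h4, H4⟩ := dl i l
  simp only [h1, h2, h3, h4] at h ⊢
  have h' := sub_eq_zero.2 h
  rw [← sub_eq_zero]
  refine Eq.trans ?_ h'
  clear h h' h1 h2 h3 h4
  rcases H1 with ⟨H1, rfl⟩ | rfl <;> rcases H2 with ⟨H2, rfl⟩ | rfl <;>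
    rcases H3 with ⟨H3, rfl⟩ | rfl <;> rcases H4 with ⟨H4, rfl⟩ | rfl <;>
    (try rw [hs H1]) <;> (try rw [hs' H2]) <;>
    (simp only [mul_add, add_mul, mul_sub, sub_mul, c1, c2, c3, c4, mul_one, one_mul, zero_mul, mul_zero, add_zero, zero_add, sub_zero, zero_sub, mul_neg, neg_mul]
     try abel)

def M1 {R κ : Type} [Ring R] [DecidableEq κ] (X : Matrix κ κ R) : Matrix (κ × κ) (κ × κ) R :=
  fun a b => if a.2 = b.2 then X a.1 b.1 else 0
def M2 {R κ : Type} [Ring R] [DecidableEq κ] (p : κ → ℕ) (X : Matrix κ κ R) : Matrix (κ × κ) (κ × κ) R :=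
  fun a b => if a.1 = b.1 then (-1 : R) ^ (p a.1 * (p a.2 + p b.2)) * X a.2 b.2 else 0
def PP {R κ : Type} [Ring R] [DecidableEq κ] (p : κ → ℕ) : Matrix (κ × κ) (κ × κ) R :=
  fun a b => if a.1 = b.2 ∧ a.2 = b.1 then (-1 : R) ^ (p a.1 * p a.2) else 0

lemma M1_mul {R κ : Type} [Ring R] [DecidableEq κ] [Fintype κ] (X Y : Matrix κ κ R) :
    M1 X * M1 Y = M1 (X * Y) := by
  ext ⟨i, k⟩ ⟨j, l⟩
  simp only [Matrix.mul_apply, M1, Fintype.sum_prod_type]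
  by_cases h : k = l <;> simp [h]

lemma M1_one {R κ : Type} [Ring R] [DecidableEq κ] : M1 (1 : Matrix κ κ R) = 1 := by
  ext ⟨i, k⟩ ⟨j, l⟩
  simp only [M1, Matrix.one_apply, Prod.mk.injEq]
  by_cases h : k = l <;> by_cases h' : i = j <;> simp [h, h']

lemma sq_sgn {R : Type} [Ring R] (n : ℕ) : (-1 : R) ^ n * (-1 : R) ^ n = 1 := by
  rw [← pow_add, ← two_mul, pow_mul]; simp

lemma sgn_sgn {R : Type} [Ring R] (n : ℕ) (x : R) : (-1 : R) ^ n * ((-1 : R) ^ n * x) = x := by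
  rw [← mul_assoc, sq_sgn, one_mul]

lemma M2_mul {R κ : Type} [Ring R] [DecidableEq κ] [Fintype κ] (p : κ → ℕ) (X Y : Matrix κ κ R) :
    M2 p X * M2 p Y = M2 p (X * Y) := by
  ext ⟨i, k⟩ ⟨j, l⟩
  simp only [Matrix.mul_apply, M2, Fintype.sum_prod_type]
  by_cases h : i = j
  · subst h
    rw [Finset.sum_eq_single i]
    · simp only [if_true, Finset.mul_sum]
      refine Finset.sum_congr rfl fun a _ => ?_
      have : ∀ x y : R, (-1 : R) ^ (p i * (p k + p a)) * x * ((-1 : R) ^ (p i * (p a + p l)) * y)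
          = (-1 : R) ^ (p i * (p k + p l)) * (x * y) := by
        intro x y
        rw [← mul_assoc, mul_assoc _ x, sgn_comm, ← mul_assoc, ← pow_add, mul_assoc]
        congr 1
        have : p i * (p k + p a) + p i * (p a + p l) = p i * (p k + p l) + 2 * (p i * p a) := by ring
        rw [this, pow_add, pow_mul]; simp
      rw [this]
    · intro b _ hb; simp [hb, hb.symm]
    · simp
  · rw [if_neg h]
    refine Finset.sum_eq_zero fun a _ => Finset.sum_eq_zero fun b _ => ?_
    by_cases h1 : i = a
    · subst h1; simp [h]
    · simp [h1]

lemma M2_one {R κ : Type} [Ring R] [DecidableEq κ] (p : κ → ℕ) : M2 p (1 : Matrix κ κ R) = 1 := by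
  ext ⟨i, k⟩ ⟨j, l⟩
  simp only [M2, Matrix.one_apply, Prod.mk.injEq]
  by_cases h : k = l <;> by_cases h' : i = j
  · simp only [h, h', if_true, and_self, mul_one]
    rw [← two_mul, mul_left_comm, pow_mul]; simp
  all_goals simp [h, h']

lemma M12 {R κ : Type} [Ring R] [DecidableEq κ] [Fintype κ] (p : κ → ℕ) (X X' : Matrix κ κ R) (i k j l : κ) :
    (M1 X * M2 p X') (i, k) (j, l) = (-1 : R) ^ (p j * (p k + p l)) * (X i j * X' k l) := by
  simp only [Matrix.mul_apply, M1, M2, Fintype.sum_prod_type]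
  rw [Finset.sum_eq_single j, Finset.sum_eq_single k]
  · simp [← mul_assoc, sgn_comm]
  · intro b _ hb; simp [hb.symm]
  · simp
  · intro b _ hb; simp [hb]
  · simp

lemma M21 {R κ : Type} [Ring R] [DecidableEq κ] [Fintype κ] (p : κ → ℕ) (X X' : Matrix κ κ R) (i k j l : κ) :
    (M2 p X' * M1 X) (i, k) (j, l) = (-1 : R) ^ (p i * (p k + p l)) * (X' k l * X i j) := by
  simp only [Matrix.mul_apply, M1, M2, Fintype.sum_prod_type]
  rw [Finset.sum_eq_single i, Finset.sum_eq_single l]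
  · simp [← mul_assoc]
  · intro b _ hb; simp [hb]
  · simp
  · intro b _ hb; simp [hb.symm]
  · simp

lemma PPl {R κ : Type} [Ring R] [DecidableEq κ] [Fintype κ] (p : κ → ℕ) (M : Matrix (κ × κ) (κ × κ) R) (i k j l : κ) :
    ((PP p : Matrix (κ × κ) (κ × κ) R) * M) (i, k) (j, l) = (-1 : R) ^ (p i * p k) * M (k, i) (j, l) := by
  simp only [Matrix.mul_apply, PP, Fintype.sum_prod_type]
  rw [Finset.sum_eq_single k, Finset.sum_eq_single i]
  · simp
  · intro b _ hb; simp [hb.symm]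
  · simp
  · intro b _ hb; simp [hb.symm]
  · simp

lemma PPr {R κ : Type} [Ring R] [DecidableEq κ] [Fintype κ] (p : κ → ℕ) (M : Matrix (κ × κ) (κ × κ) R) (i k j l : κ) :
    (M * (PP p : Matrix (κ × κ) (κ × κ) R)) (i, k) (j, l) = (-1 : R) ^ (p j * p l) * M (i, k) (l, j) := by
  simp only [Matrix.mul_apply, PP, Fintype.sum_prod_type]
  rw [Finset.sum_eq_single l, Finset.sum_eq_single j]
  · simp [sgn_comm, mul_comm]
  · intro b _ hb; simp [hb]
  · simp
  · intro b _ hb; simp [hb]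
  · simp

lemma RTT_iff {R κ : Type} [Ring R] [DecidableEq κ] [Fintype κ] (p : κ → ℕ)
    (X X' : Matrix κ κ R) :
    RTT p X X' ↔ (1 - PP p) * (M1 X * M2 p X') = (M2 p X' * M1 X) * (1 - PP p) := by
  have e : ∀ a b : ℕ, ∀ c, a = b + 2 * c → (-1 : R) ^ a = (-1 : R) ^ b := by
    intro a b c h; rw [h, pow_add, pow_mul]; simp
  have key : ∀ i j k l, (X i j * X' k l - (-1 : R) ^ (p i * p j + p i * p k + p j * p k) * (X k j * X' i l)
    = (-1 : R) ^ ((p i + p j) * (p k + p l)) * (X' k l * X i j)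
      - (-1 : R) ^ (p i * p j + p i * p k + p j * p k) * (X' k j * X i l)) ↔
      ((1 - (PP p : Matrix (κ × κ) (κ × κ) R)) * (M1 X * M2 p X')) (i, k) (j, l) = ((M2 p X' * M1 X) * (1 - (PP p : Matrix (κ × κ) (κ × κ) R))) (i, k) (j, l) := by
    intro i j k l
    rw [sub_mul, mul_sub, Matrix.sub_apply, Matrix.sub_apply, PPl, PPr, one_mul, mul_one]
    simp only [M12, M21]
    constructor
    · intro h
      have h2 := congrArg (fun x => (-1 : R) ^ (p j * (p k + p l)) * x) h
      simp only [mul_sub, ← mul_assoc, ← pow_add] at h2 ⊢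
      rw [e _ _ (p j * p k) (by ring : p j * (p k + p l) + (p i * p j + p i * p k + p j * p k) =
        p i * p k + p j * (p i + p l) + 2 * (p j * p k))] at h2
      rw [e _ _ (p j * (p k + p l)) (by ring : p j * (p k + p l) + (p i + p j) * (p k + p l) =
        p i * (p k + p l) + 2 * (p j * (p k + p l)))] at h2
      rw [e (p i * p k + p j * (p i + p l)) (p j * p l + p i * (p k + p j)) 0 (by ring)] at h2 ⊢
      exact h2
    · intro h
      have h2 := congrArg (fun x => (-1 : R) ^ (p j * (p k + p l)) * x) h
      simp only [mul_sub, ← mul_assoc, ← pow_add] at h2 ⊢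
      rw [e (p j * (p k + p l) + p j * (p k + p l)) 0 (p j * (p k + p l)) (by ring),
        e (p j * (p k + p l) + p i * (p k + p l)) ((p i + p j) * (p k + p l)) 0 (by ring),
        e _ _ (p j * p l) (by ring : p j * (p k + p l) + (p i * p k + p j * (p i + p l)) =
          p i * p j + p i * p k + p j * p k + 2 * (p j * p l)),
        e _ _ (p j * p l) (by ring : p j * (p k + p l) + (p j * p l + p i * (p k + p j)) =
          p i * p j + p i * p k + p j * p k + 2 * (p j * p l)), pow_zero, one_mul] at h2
      exact h2
  constructor
  · intro h
    ext ⟨i, k⟩ ⟨j, l⟩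
    exact (key i j k l).1 (h i j k l)
  · intro h i j k l
    rw [key, h]

lemma RTT_inv {R κ : Type} [Ring R] [DecidableEq κ] [Fintype κ] (p : κ → ℕ)
    (X X' Y Y' : Matrix κ κ R) (h : RTT p X X') (h1 : X * Y = 1) (h2 : Y * X = 1)
    (h3 : X' * Y' = 1) (h4 : Y' * X' = 1) : RTT p Y' Y := by
  rw [RTT_iff] at h
  -- derive relation for Y,Y' : M2 Y' , M1 Y
  have a1 : M1 X * M1 Y = 1 := by rw [M1_mul, h1, M1_one]
  have a2 : M1 Y * M1 X = 1 := by rw [M1_mul, h2, M1_one]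
  have a3 : M2 p X' * M2 p Y' = 1 := by rw [M2_mul, h3, M2_one]
  have a4 : M2 p Y' * M2 p X' = 1 := by rw [M2_mul, h4, M2_one]
  -- from A X1 X2' = X2' X1 A : Y1 Y2' A = A Y2' Y1
  have h5 : M1 Y * M2 p Y' * (1 - PP p) = (1 - PP p) * (M2 p Y' * M1 Y) := by
    have := congrArg (fun Z => (M1 Y * M2 p Y') * Z * (M2 p Y' * M1 Y)) h
    calc M1 Y * M2 p Y' * (1 - PP p)
        = (M1 Y * M2 p Y') * ((1 - PP p) * (M1 X * M2 p X')) * (M2 p Y' * M1 Y) := by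
          rw [mul_assoc (M1 Y * M2 p Y'), mul_assoc (1 - PP p), mul_assoc (M1 X), ← mul_assoc (M2 p X'), a3, one_mul, a1, mul_one]
      _ = (M1 Y * M2 p Y') * ((M2 p X' * M1 X) * (1 - PP p)) * (M2 p Y' * M1 Y) := this
      _ = _ := by
          rw [mul_assoc (M2 p X'), mul_assoc (M1 Y), ← mul_assoc (M2 p Y') (M2 p X'), a4, one_mul, ← mul_assoc (M1 Y), a2, one_mul]
  -- entrywise
  intro i j k l
  have e : ∀ a b : ℕ, ∀ c, a = b + 2 * c → (-1 : R) ^ a = (-1 : R) ^ b := by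
    intro a b c h; rw [h, pow_add, pow_mul]; simp
  have h6 := congrFun (congrFun h5 (k, i)) (l, j)
  rw [sub_mul, mul_sub, Matrix.sub_apply, Matrix.sub_apply, PPl, PPr, one_mul, mul_one] at h6
  simp only [M12, M21] at h6
  have h2 := congrArg (fun x => (-1 : R) ^ (p k * (p i + p j)) * x) h6
  simp only [mul_sub, ← mul_assoc, ← pow_add] at h2 ⊢
  rw [e (p k * (p i + p j) + p l * (p i + p j)) ((p i + p j) * (p k + p l)) 0 (by ring),
    e (p k * (p i + p j) + p k * (p i + p j)) 0 (p k * (p i + p j)) (by ring),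
    e (p k * (p i + p j) + (p l * p j + p j * (p i + p l))) (p i * p j + p i * p k + p j * p k) (p l * p j) (by ring),
    e (p k * (p i + p j) + (p k * p i + p i * (p k + p j))) (p i * p j + p i * p k + p j * p k) (p k * p i) (by ring),
    pow_zero, one_mul] at h2
  exact h2.symm


def Xs {R ι : Type} [Ring R] [DecidableEq ι] (p r : ι → ℕ) (e : ι → ι → R) (s : ℕ) (u : R) : Matrix ι ι R :=
  fun i j => (if i = j then u else 0) + (if r i < s ∧ r j < s then Emat p e i j else 0)

def IsInv {R ι : Type} [Ring R] [DecidableEq ι] [Fintype ι] (X Y : Matrix ι ι R) : Prop := X * Y = 1 ∧ Y * X = 1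

lemma Xs_row {R ι : Type} [Ring R] [DecidableEq ι] [Fintype ι] {p r : ι → ℕ} {e : ι → ι → R} {s : ℕ} {u : R}
    {Y : Matrix ι ι R} (h : IsInv (Xs p r e s u) Y) (i j : ι) (hi : s ≤ r i) :
    u * Y i j = if i = j then 1 else 0 := by
  have := congrFun (congrFun h.1 i) j
  rw [Matrix.mul_apply, Matrix.one_apply] at this
  rw [← this]
  simp [Xs, not_lt.2 hi]

lemma Xs_col {R ι : Type} [Ring R] [DecidableEq ι] [Fintype ι] {p r : ι → ℕ} {e : ι → ι → R} {s : ℕ} {u : R}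
    {Y : Matrix ι ι R} (h : IsInv (Xs p r e s u) Y) (i j : ι) (hj : s ≤ r j) :
    Y i j * u = if i = j then 1 else 0 := by
  have := congrFun (congrFun h.2 i) j
  rw [Matrix.mul_apply, Matrix.one_apply] at this
  rw [← this]
  simp [Xs, not_lt.2 hj]

lemma Y_block1 {R ι : Type} [Ring R] [DecidableEq ι] [Fintype ι] {p r : ι → ℕ} {e : ι → ι → R} {s : ℕ} {u : R}
    {Y : Matrix ι ι R} (h : IsInv (Xs p r e s u) Y) (i j : ι) (hi : s ≤ r i) (hij : i ≠ j) : Y i j = 0 := by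
  have h1 := Xs_row h i j hi
  have h2 := Xs_col h i i hi
  rw [if_neg hij] at h1
  rw [if_pos rfl] at h2
  calc Y i j = Y i i * u * Y i j := by rw [h2, one_mul]
    _ = 0 := by rw [mul_assoc, h1, mul_zero]

lemma Y_block2 {R ι : Type} [Ring R] [DecidableEq ι] [Fintype ι] {p r : ι → ℕ} {e : ι → ι → R} {s : ℕ} {u : R}
    {Y : Matrix ι ι R} (h : IsInv (Xs p r e s u) Y) (i j : ι) (hj : s ≤ r j) (hij : i ≠ j) : Y i j = 0 := by
  have h1 := Xs_col h i j hj
  have h2 := Xs_row h j j hj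
  rw [if_neg hij] at h1
  rw [if_pos rfl] at h2
  calc Y i j = Y i j * (u * Y j j) := by rw [h2, mul_one]
    _ = 0 := by rw [← mul_assoc, h1, zero_mul]

lemma sum_sub {R ι : Type} [Ring R] [Fintype ι] (P : ι → Prop) [DecidablePred P] (f : ι → R)
    (h : ∀ i, ¬ P i → f i = 0) : ∑ i, f i = ∑ i : {i // P i}, f i := by
  rw [← Finset.sum_subtype (p := P) (Finset.univ.filter P) (by simp) f, Finset.sum_filter]
  refine Finset.sum_congr rfl fun i _ => ?_
  by_cases hi : P i <;> simp [hi, h]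

lemma Xs_sub {R ι : Type} [Ring R] [DecidableEq ι] [Fintype ι] {p r : ι → ℕ} {e : ι → ι → R} {s : ℕ} {u : R}
    {Y : Matrix ι ι R} (h : IsInv (Xs p r e s u) Y) :
    IsInv (Xmat (fun i : {i // r i < s} => p i) (fun i j => e i j) u) (Y.submatrix Subtype.val Subtype.val) := by
  have hX : ∀ i j : {i // r i < s}, Xmat (fun i : {i // r i < s} => p i) (fun i j => e i j) u i j =
      Xs p r e s u i j := by
    intro i j
    simp [Xmat, Xs, i.2, j.2, Emat, Subtype.ext_iff]
  constructor
  · ext i j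
    have := congrFun (congrFun h.1 i) j
    rw [Matrix.mul_apply, Matrix.one_apply, sum_sub (fun i => r i < s)] at this
    · rw [Matrix.mul_apply, Matrix.one_apply]
      simpa only [hX, Matrix.submatrix_apply, Subtype.ext_iff] using this
    · intro a ha
      have : (i : ι) ≠ a := by rintro rfl; exact ha i.2
      simp [Xs, ha, this]
  · ext i j
    have := congrFun (congrFun h.2 i) j
    rw [Matrix.mul_apply, Matrix.one_apply, sum_sub (fun i => r i < s)] at this
    · rw [Matrix.mul_apply, Matrix.one_apply]
      simpa only [hX, Matrix.submatrix_apply, Subtype.ext_iff] using this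
    · intro a ha
      have : a ≠ (j : ι) := by rintro rfl; exact ha j.2
      simp [Xs, ha, this]

lemma RTT_Y {R ι : Type} [Ring R] [DecidableEq ι] [Fintype ι] {p r : ι → ℕ} (hp : ∀ i, p i = 0 ∨ p i = 1)
    {e : ι → ι → R} (he : GLrel p e) {s : ℕ} {u : R} (hu : ∀ x, Commute u x)
    {Y Y' : Matrix ι ι R} (h : IsInv (Xs p r e s u) Y) (h' : IsInv (Xs p r e s (u - 1)) Y') :
    RTT (fun i : {i // r i < s} => p i) (Y'.submatrix Subtype.val Subtype.val) (Y.submatrix Subtype.val Subtype.val) := by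
  have a := Xs_sub h
  have a' := Xs_sub h'
  refine RTT_inv _ _ _ _ _ (RTT_X (fun i : {i // r i < s} => p i) (fun i => hp i) (fun i j => e i j) ?_ u hu) a.1 a.2 a'.1 a'.2
  intro i j k l
  simpa only [Subtype.ext_iff] using he i j k l

def Kmat {R ι : Type} [Ring R] [DecidableEq ι] (p : ι → ℕ) (e : ι → ι → R) (k l : ι) : Matrix ι ι R :=
  fun i j => (-1 : R) ^ ((p k + p l) * p i) * ((if i = j then e k l else 0) -
    (-1 : R) ^ (p k + p l) * (if i = l then (if j = k then 1 else 0) else 0))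

lemma K_mul {R ι : Type} [Ring R] [DecidableEq ι] [Fintype ι] (p : ι → ℕ) (e : ι → ι → R) (k l i j : ι) (X : Matrix ι ι R) :
    (Kmat p e k l * X) i j = (-1 : R) ^ ((p k + p l) * p i) * (e k l * X i j - (-1 : R) ^ (p k + p l) * (if i = l then X k j else 0)) := by
  rw [Matrix.mul_apply]
  simp only [Kmat, mul_sub, sub_mul, Finset.sum_sub_distrib]
  congr 1
  · rw [Finset.sum_eq_single i] <;> simp +contextual [mul_assoc, eq_comm]
  · rw [Finset.sum_eq_single k] <;> simp +contextual [mul_assoc]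

lemma mul_K {R ι : Type} [Ring R] [DecidableEq ι] [Fintype ι] (p : ι → ℕ) (e : ι → ι → R) (k l i j : ι) (X : Matrix ι ι R) :
    (X * Kmat p e k l) i j = (-1 : R) ^ ((p k + p l) * p j) * (X i j * e k l) - (-1 : R) ^ ((p k + p l) * p l + (p k + p l)) * (if j = k then X i l else 0) := by
  rw [Matrix.mul_apply]
  simp only [Kmat, mul_sub, Finset.sum_sub_distrib]
  congr 1
  · rw [Finset.sum_eq_single j]
    · simp only [if_true]; rw [← mul_assoc, sgn_comm, mul_assoc]
    · intro b _ hb; simp [hb]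
    · simp
  · rw [Finset.sum_eq_single l]
    · by_cases h : j = k
      · simp only [if_true, h, mul_one]; rw [← pow_add, sgn_comm]
      · simp [h]
    · intro b _ hb; simp [hb]
    · simp

lemma K_comm {R ι : Type} [Ring R] [DecidableEq ι] [Fintype ι] {p r : ι → ℕ} (hp : ∀ i, p i = 0 ∨ p i = 1)
    {e : ι → ι → R} (he : GLrel p e) {s : ℕ} {u : R} (hu : ∀ x, Commute u x) (k l : ι) (hk : r k < s) (hl : r l < s) :
    Kmat p e k l * Xs p r e s u = Xs p r e s u * Kmat p e k l := by
  ext i j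
  rw [K_mul, mul_K]
  by_cases hi : r i < s <;> by_cases hj : r j < s
  · have h := Emat_rel p hp e he k l i j
    have h0 : e k l = (-1 : R) ^ (p k) * Emat p e k l := by rw [Emat, sgn_sgn]
    rw [h0]
    simp only [Xs, hi, hj, hk, hl, and_self, if_true]
    have c1 := (hu (Emat p e k l)).eq.symm
    generalize hA : Emat p e k l = a at *
    generalize hB : Emat p e i j = b at *
    generalize hC : Emat p e k j = c at *
    generalize hD : Emat p e i l = d at *
    have dl : ∀ x y : ι, ∃ δ : R, (∀ z, (if x = y then z else 0) = δ * z) ∧ (∀ z, (if y = x then z else 0) = δ * z) ∧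
        ((x = y ∧ δ = 1) ∨ δ = 0) := by
      intro x y
      by_cases hxy : x = y
      · exact ⟨1, by simp [hxy], by simp [hxy], Or.inl ⟨hxy, rfl⟩⟩
      · exact ⟨0, by simp [hxy], by simp [Ne.symm hxy], Or.inr rfl⟩
    obtain ⟨d1, h1, h1', H1⟩ := dl i j
    obtain ⟨d2, h2, h2', H2⟩ := dl k l
    obtain ⟨d3, h3, h3', H3⟩ := dl k j
    obtain ⟨d4, h4, h4', H4⟩ := dl i l
    have e1 : i = j → p i = p j := congrArg p
    have e2 : k = l → p k = p l := congrArg p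
    have e3 : k = j → p k = p j := congrArg p
    have e4 : i = l → p i = p l := congrArg p
    simp only [h1, h2, h3, h4, h1', h2', h3', h4'] at h ⊢
    have hab : a * b = (-1 : R) ^ ((p k + p l) * (p i + p j)) * (b * a) + (-1 : R) ^ (p k * p l + p k * p i + p l * p i) * (d4 * c - d3 * d) := by
      rw [← h]; abel
    clear hA hB hC hD h h1 h2 h3 h4 h1' h2' h3' h4' dl h0
    have hmain : ∀ (ek el ei ej : R), True := fun _ _ _ _ => trivial
    rcases hp k with pk | pk <;> rcases hp l with pl | pl <;> rcases hp i with pi | pi <;> rcases hp j with pj | pj <;>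
    simp only [pk, pl, pi, pj] at e1 e2 e3 e4 hab ⊢ <;>
    rcases H1 with ⟨H1, rfl⟩ | rfl <;> 
    rcases H3 with ⟨H3, rfl⟩ | rfl <;> rcases H4 with ⟨H4, rfl⟩ | rfl <;>
    first
    | exact absurd (e1 H1) Nat.zero_ne_one
    | exact absurd (e1 H1) Nat.one_ne_zero
    | exact absurd (e3 H3) Nat.zero_ne_one
    | exact absurd (e3 H3) Nat.one_ne_zero
    | exact absurd (e4 H4) Nat.zero_ne_one
    | exact absurd (e4 H4) Nat.one_ne_zero
    | (norm_num [mul_add, add_mul, mul_sub, sub_mul, c1, mul_assoc] at hab ⊢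
       try rw [hab]
       try abel)
  · have hij : i ≠ j := by rintro rfl; exact hj hi
    have hjk : j ≠ k := by rintro rfl; exact hj hk
    have hkj : k ≠ j := hjk.symm
    simp [Xs, hj, hij, hjk, hkj]
  · have hij : i ≠ j := by rintro rfl; exact hi hj
    have hil : i ≠ l := by rintro rfl; exact hi hl
    simp [Xs, hi, hij, hil]
  · have hil : i ≠ l := by rintro rfl; exact hi hl
    have hjk : j ≠ k := by rintro rfl; exact hj hk
    by_cases hij : i = j
    · subst hij
      simp [Xs, hi, hil, hjk, (hu (e k l)).eq]
    · simp [Xs, hi, hij, hil, hjk]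

lemma inv_comm {R ι : Type} [Ring R] [DecidableEq ι] [Fintype ι] {X Y K : Matrix ι ι R} (h : IsInv X Y)
    (hK : K * X = X * K) : K * Y = Y * K := by
  calc K * Y = (Y * X) * K * Y := by rw [h.2, one_mul]
    _ = Y * (K * X) * Y := by rw [hK]; simp only [mul_assoc]
    _ = Y * K := by rw [mul_assoc, mul_assoc, h.1, mul_one]

lemma sgn_cancel {R : Type} [Ring R] (n : ℕ) {x y : R} (h : (-1 : R) ^ n * x = (-1 : R) ^ n * y) : x = y := by
  have := congrArg (fun z => (-1 : R) ^ n * z) h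
  simpa only [sgn_sgn] using this

/-- covariance of the inverse, entrywise -/
lemma cov_Y {R ι : Type} [Ring R] [DecidableEq ι] [Fintype ι] {p r : ι → ℕ} (hp : ∀ i, p i = 0 ∨ p i = 1)
    {e : ι → ι → R} (he : GLrel p e) {s : ℕ} {u : R} (hu : ∀ x, Commute u x) (k l : ι) (hk : r k < s) (hl : r l < s)
    {Y : Matrix ι ι R} (h : IsInv (Xs p r e s u) Y) (i j : ι) :
    (-1 : R) ^ ((p k + p l) * p i) * (e k l * Y i j - (-1 : R) ^ (p k + p l) * (if i = l then Y k j else 0)) =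
    (-1 : R) ^ ((p k + p l) * p j) * (Y i j * e k l) - (-1 : R) ^ ((p k + p l) * p l + (p k + p l)) * (if j = k then Y i l else 0) := by
  rw [← K_mul, ← mul_K, inv_comm h (K_comm hp he hu k l hk hl)]

lemma cov_Y_hi {R ι : Type} [Ring R] [DecidableEq ι] [Fintype ι] {p r : ι → ℕ} (hp : ∀ i, p i = 0 ∨ p i = 1)
    {e : ι → ι → R} (he : GLrel p e) {s : ℕ} {u : R} (hu : ∀ x, Commute u x) (k l : ι) (hk : s ≤ r k) (hl : s ≤ r l)
    {Y : Matrix ι ι R} (h : IsInv (Xs p r e s u) Y) (i : ι) : Commute (e k l) (Y i i) := by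
  set G : Matrix ι ι R := Matrix.diagonal (fun i => (-1 : R) ^ ((p k + p l) * p i) * e k l) with hG
  have hc : G * Xs p r e s u = Xs p r e s u * G := by
    ext i j
    rw [hG, Matrix.diagonal_mul, Matrix.mul_diagonal]
    by_cases hij : r i < s ∧ r j < s
    · have h1 := Emat_rel p hp e he k l i j
      have n1 : i ≠ l := by rintro rfl; omega
      have n2 : k ≠ j := by rintro rfl; omega
      rw [if_neg n1, if_neg n2, sub_zero, mul_zero, sub_eq_zero] at h1
      have h0 : e k l = (-1 : R) ^ (p k) * Emat p e k l := by rw [Emat, sgn_sgn]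
      simp only [Xs, if_pos hij]
      rw [mul_add ((-1 : R) ^ ((p k + p l) * p i) * e k l), add_mul (if i = j then u else 0)]
      congr 1
      · by_cases hh : i = j
        · subst hh; simp only [if_true]; exact (hu _).eq.symm
        · simp [hh]
      · rw [h0]
        rw [show (-1 : R) ^ ((p k + p l) * p i) * ((-1) ^ p k * Emat p e k l) * Emat p e i j =
          (-1 : R) ^ ((p k + p l) * p i) * ((-1) ^ p k * (Emat p e k l * Emat p e i j)) by simp only [mul_assoc], h1]
        rw [← mul_assoc (Emat p e i j), sgn_comm, mul_assoc _ (Emat p e i j), ← mul_assoc (Emat p e i j), sgn_comm]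
        simp only [← mul_assoc, ← pow_add]
        congr 2
        have : (p k + p l) * p i + (p k + (p k + p l) * (p i + p j)) = (p k + p l) * p j + p k + 2 * ((p k + p l) * p i) := by ring
        rw [this, pow_add, pow_mul]; simp
    · simp only [Xs, if_neg hij, add_zero]
      by_cases hh : i = j
      · subst hh; simp only [if_true]; exact (hu _).eq.symm
      · simp [hh]
  have := congrFun (congrFun (inv_comm h hc) i) i
  rw [hG, Matrix.diagonal_mul, Matrix.mul_diagonal, ← mul_assoc, sgn_comm, mul_assoc, mul_assoc] at this
  exact sgn_cancel _ this

lemma cov_Y_lo {R ι : Type} [Ring R] [DecidableEq ι] [Fintype ι] {p r : ι → ℕ} (hp : ∀ i, p i = 0 ∨ p i = 1)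
    {e : ι → ι → R} (he : GLrel p e) {s : ℕ} {u : R} (hu : ∀ x, Commute u x) (k l : ι) (hk : r k < s) (hl : r l < s)
    {Y : Matrix ι ι R} (h : IsInv (Xs p r e s u) Y) (i : ι) (hik : i ≠ k) (hil : i ≠ l) : Commute (e k l) (Y i i) := by
  have := cov_Y hp he hu k l hk hl h i i
  rw [if_neg hil, if_neg hik, mul_zero, mul_zero, sub_zero, sub_zero] at this
  exact sgn_cancel _ this

lemma cov_Y_diag {R ι : Type} [Ring R] [DecidableEq ι] [Fintype ι] {p r : ι → ℕ} (hp : ∀ i, p i = 0 ∨ p i = 1)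
    {e : ι → ι → R} (he : GLrel p e) {s : ℕ} {u : R} (hu : ∀ x, Commute u x) (k : ι)
    {Y : Matrix ι ι R} (h : IsInv (Xs p r e s u) Y) (i : ι) : Commute (e k k) (Y i i) := by
  rcases lt_or_ge (r k) s with hk | hk
  · by_cases hik : i = k
    · subst hik
      have := cov_Y hp he hu i i hk hk h i i
      rw [if_pos rfl] at this
      have e1 : ∀ a : ℕ, (-1 : R) ^ ((a + a)) = 1 := fun a => by rw [← two_mul, pow_mul]; simp
      have e2 : (-1 : R) ^ ((p i + p i) * p i) = 1 := by rw [pow_mul, e1, one_pow]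
      rw [pow_add _ ((p i + p i) * p i), e2, e1] at this
      simp only [one_mul, if_true, sub_left_inj] at this
      exact this
    · exact cov_Y_lo hp he hu k k hk hk h i hik hik
  · exact cov_Y_hi hp he hu k k hk hk h i


lemma Xs_succ {R ι : Type} [Ring R] [DecidableEq ι] {p r : ι → ℕ} (hr : Function.Injective r) {e : ι → ι → R}
    {s : ℕ} {u : R} {b : ι} (hb : r b = s) (i j : ι) (hi : r i < s) :
    Xs p r e (s+1) u i j = Xs p r e s u i j + (if j = b then Xs p r e (s+1) u i b else 0) := by
  by_cases h : j = b
  · subst h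
    have : i ≠ j := by rintro rfl; omega
    simp [Xs, this, hb]
  · have : r j ≠ s := fun h' => h (hr (h'.trans hb.symm))
    have h2 : (r j < s + 1) ↔ r j < s := by omega
    have h3 : r i < s + 1 := by omega
    simp [Xs, h, h2, h3, hi]

lemma Xs_succ' {R ι : Type} [Ring R] [DecidableEq ι] {p r : ι → ℕ} (hr : Function.Injective r) {e : ι → ι → R}
    {s : ℕ} {u : R} {b : ι} (hb : r b = s) (i j : ι) (hj : r j < s) :
    Xs p r e (s+1) u i j = Xs p r e s u i j + (if i = b then Xs p r e (s+1) u b j else 0) := by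
  by_cases h : i = b
  · subst h
    have : i ≠ j := by rintro rfl; omega
    simp [Xs, this, hb]
  · have : r i ≠ s := fun h' => h (hr (h'.trans hb.symm))
    have h2 : (r i < s + 1) ↔ r i < s := by omega
    have h3 : r j < s + 1 := by omega
    simp [Xs, h, h2, h3, hj]

def dS {R ι : Type} [Ring R] [DecidableEq ι] [Fintype ι] (p r : ι → ℕ) (e : ι → ι → R) (s : ℕ) (u : R)
    (W : Matrix ι ι R) (b : ι) : R :=
  Xs p r e (s+1) u b b - ∑ k, (if r k < s then Xs p r e (s+1) u b k else 0) *
    ∑ i, W k i * (if r i < s then Xs p r e (s+1) u i b else 0)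

section schur
variable {R ι : Type} [Ring R] [DecidableEq ι] [Fintype ι] {p r : ι → ℕ} (hr : Function.Injective r) {e : ι → ι → R}
    {s : ℕ} {u : R} {b : ι} (hb : r b = s) {Y W : Matrix ι ι R} (hY : IsInv (Xs p r e (s+1) u) Y)
    (hW : IsInv (Xs p r e s u) W)

include hr hb hY hW

lemma schur_col (k : ι) (hk : r k < s) :
    Y k b = -((∑ i, W k i * (if r i < s then Xs p r e (s+1) u i b else 0)) * Y b b) := by
  have h1 : Y k b = ∑ i, W k i * ∑ j, Xs p r e s u i j * Y j b := by
    have := congrFun (congrFun (show W * (Xs p r e s u * Y) = Y by rw [← mul_assoc, hW.2, one_mul]) k) b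
    rw [← this, Matrix.mul_apply]
    rfl
  rw [h1, Finset.sum_mul, ← Finset.sum_neg_distrib]
  refine Finset.sum_congr rfl fun i _ => ?_
  by_cases hi : r i < s
  · have h2 := congrFun (congrFun hY.1 i) b
    have hib : i ≠ b := by rintro rfl; omega
    rw [Matrix.mul_apply, Matrix.one_apply, if_neg hib] at h2
    rw [Finset.sum_congr rfl (fun j _ => by rw [Xs_succ hr hb i j hi])] at h2
    simp only [add_mul, Finset.sum_add_distrib, ite_mul, zero_mul,
      Finset.sum_ite_eq', Finset.mem_univ, if_true] at h2
    rw [eq_neg_of_add_eq_zero_left h2, if_pos hi]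
    simp [mul_assoc]
  · have : W k i = 0 := Y_block2 hW k i (by omega) (by rintro rfl; exact hi hk)
    simp [this]

lemma schur_row (k : ι) (hk : r k < s) :
    Y b k = -(Y b b * (∑ i, (if r i < s then Xs p r e (s+1) u b i else 0) * W i k)) := by
  have h1 : Y b k = ∑ i, (∑ j, Y b j * Xs p r e s u j i) * W i k := by
    have := congrFun (congrFun (show (Y * Xs p r e s u) * W = Y by rw [mul_assoc, hW.1, mul_one]) b) k
    rw [← this, Matrix.mul_apply]
    rfl
  rw [h1, Finset.mul_sum, ← Finset.sum_neg_distrib]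
  refine Finset.sum_congr rfl fun i _ => ?_
  by_cases hi : r i < s
  · have h2 := congrFun (congrFun hY.2 b) i
    have hib : b ≠ i := by rintro rfl; omega
    rw [Matrix.mul_apply, Matrix.one_apply, if_neg hib] at h2
    rw [Finset.sum_congr rfl (fun j _ => by rw [Xs_succ' hr hb j i hi])] at h2
    simp only [mul_add, Finset.sum_add_distrib, mul_ite, mul_zero,
      Finset.sum_ite_eq', Finset.mem_univ, if_true] at h2
    rw [eq_neg_of_add_eq_zero_left h2, if_pos hi]
    simp [mul_assoc]
  · have : W i k = 0 := Y_block1 hW i k (by omega) (by rintro rfl; exact hi hk)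
    simp [this]

lemma schur_d1 : dS p r e s u W b * Y b b = 1 := by
  have h2 := congrFun (congrFun hY.1 b) b
  rw [Matrix.mul_apply, Matrix.one_apply, if_pos rfl] at h2
  rw [← h2, dS, sub_mul, Finset.sum_mul, sub_eq_add_neg, ← Finset.sum_neg_distrib,
    ← Finset.add_sum_erase Finset.univ (fun k => Xs p r e (s+1) u b k * Y k b) (Finset.mem_univ b)]
  congr 1
  rw [← Finset.add_sum_erase Finset.univ _ (Finset.mem_univ b), if_neg (by omega), zero_mul, zero_mul, neg_zero, zero_add]
  refine Finset.sum_congr rfl fun k hk => ?_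
  have hkb : k ≠ b := (Finset.mem_erase.1 hk).1
  by_cases hk : r k < s
  · rw [if_pos hk, schur_col hr hb hY hW k hk, mul_neg, mul_assoc]
  · have : r k ≠ s := fun h' => hkb (hr (h'.trans hb.symm))
    have h3 : ¬ (r k < s + 1) := by omega
    simp [hk, Xs, h3, hkb.symm]

lemma schur_d2 : Y b b * dS p r e s u W b = 1 := by
  have h2 := congrFun (congrFun hY.2 b) b
  rw [Matrix.mul_apply, Matrix.one_apply, if_pos rfl] at h2
  have h0 : dS p r e s u W b = Xs p r e (s+1) u b b - ∑ i, (∑ k, (if r k < s then Xs p r e (s+1) u b k else 0) *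
     W k i) * (if r i < s then Xs p r e (s+1) u i b else 0) := by
    rw [dS]
    congr 1
    simp only [Finset.mul_sum, Finset.sum_mul]
    rw [Finset.sum_comm]
    simp only [mul_assoc]
  rw [← h2, h0, mul_sub, Finset.mul_sum, sub_eq_add_neg, ← Finset.sum_neg_distrib,
    ← Finset.add_sum_erase Finset.univ (fun k => Y b k * Xs p r e (s+1) u k b) (Finset.mem_univ b)]
  congr 1
  rw [← Finset.add_sum_erase Finset.univ _ (Finset.mem_univ b), if_neg (by omega), mul_zero, mul_zero, neg_zero, zero_add]
  refine Finset.sum_congr rfl fun k hk => ?_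
  have hkb : k ≠ b := (Finset.mem_erase.1 hk).1
  by_cases hk : r k < s
  · rw [if_pos hk, schur_row hr hb hY hW k hk, neg_mul, mul_assoc]
  · have : r k ≠ s := fun h' => hkb (hr (h'.trans hb.symm))
    have h3 : ¬ (r k < s + 1) := by omega
    simp [hk, Xs, h3, hkb]

lemma schur_W (i j : ι) (hi : r i < s) (hj : r j < s) :
    W i j = Y i j - Y i b * dS p r e s u W b * Y b j := by
  have d2 := schur_d2 hr hb hY hW
  have h1 : W i j = ∑ k, W i k * (∑ l, Xs p r e (s+1) u k l * (Y l j - Y l b * dS p r e s u W b * Y b j)) := by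
    rw [Finset.sum_eq_single j]
    · have h3 := congrFun (congrFun hY.1 j) j
      have h4 := congrFun (congrFun hY.1 j) b
      have hjb : j ≠ b := by rintro rfl; omega
      rw [Matrix.mul_apply, Matrix.one_apply] at h3 h4
      simp only [mul_sub, ← mul_assoc, Finset.sum_sub_distrib, ← Finset.sum_mul, h3, h4, if_neg hjb, zero_mul]
      simp
    · intro k _ hkj
      by_cases hk : r k < s
      · have h3 := congrFun (congrFun hY.1 k) j
        have h4 := congrFun (congrFun hY.1 k) b
        have hjb : k ≠ b := by rintro rfl; omega
        rw [Matrix.mul_apply, Matrix.one_apply] at h3 h4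
        simp only [mul_sub, ← mul_assoc, Finset.sum_sub_distrib, ← Finset.sum_mul, h3, h4, if_neg hjb, if_neg hkj, zero_mul]
        simp
      · have : W i k = 0 := Y_block2 hW i k (by omega) (by rintro rfl; exact hk hi)
        simp [this]
    · simp
  have h5 : ∑ k, W i k * (∑ l, Xs p r e s u k l * (Y l j - Y l b * dS p r e s u W b * Y b j)) =
     Y i j - Y i b * dS p r e s u W b * Y b j := by
    have := congrFun (congrFun (show W * (Xs p r e s u * (Matrix.of fun l j => Y l j - Y l b * dS p r e s u W b * Y b j)) =
      (Matrix.of fun l j => Y l j - Y l b * dS p r e s u W b * Y b j) by rw [← mul_assoc, hW.2, one_mul]) i) j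
    refine Eq.trans ?_ this
    rw [Matrix.mul_apply]
    rfl
  rw [h1, ← h5]
  refine Finset.sum_congr rfl fun k _ => ?_
  by_cases hk : r k < s
  · congr 1
    refine Finset.sum_congr rfl fun l _ => ?_
    rw [Xs_succ hr hb k l hk]
    by_cases hl : l = b
    · subst hl
      rw [d2, one_mul, sub_self, mul_zero, mul_zero]
    · rw [if_neg hl, add_zero]
  · have : W i k = 0 := Y_block2 hW i k (by omega) (by rintro rfl; exact hk hi)
    simp [this]

end schur


lemma dmul {R : Type} [Ring R] {e x y c d : R} (h1 : e * x = x * e + c) (h2 : e * y = y * e + d) :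
    e * (x * y) = (x * y) * e + (c * y + x * d) := by
  rw [← mul_assoc, h1, add_mul, mul_assoc, h2]; noncomm_ring

section covs
variable {R ι : Type} [Ring R] [DecidableEq ι] [Fintype ι] {p r : ι → ℕ} (hp : ∀ i, p i = 0 ∨ p i = 1)
    {e : ι → ι → R} (he : GLrel p e) {s : ℕ} {u : R} (hu : ∀ x, Commute u x) {a b : ι} (ha : r a < s) (hb : r b < s)
    (hab : a ≠ b) {Y : Matrix ι ι R} (h : IsInv (Xs p r e s u) Y)

include hp he hu ha hb hab h

lemma covs_same (hpp : p a = p b) : e a b * Y a a = Y a a * e a b + (-(Y a b)) ∧ e a b * Y a b = Y a b * e a b + 0 ∧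
    e a b * Y b a = Y b a * e a b + (Y a a - Y b b) ∧ e a b * Y b b = Y b b * e a b + Y a b := by
  have c := cov_Y hp he hu a b ha hb h
  have c1 := c a a
  have c2 := c a b
  have c3 := c b a
  have c4 := c b b
  simp only [hab, hab.symm, if_true, if_false, mul_zero, sub_zero, hpp] at c1 c2 c3 c4
  have q : p b = 0 ∨ p b = 1 := hp b
  rcases q with q | q <;> simp only [q] at c1 c2 c3 c4 <;> norm_num at c1 c2 c3 c4 <;>
  refine ⟨by rw [c1]; abel, by rw [c2]; abel, ?_, ?_⟩
  · rw [sub_eq_iff_eq_add.1 c3]; abel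
  · rw [sub_eq_iff_eq_add.1 c4]
  · rw [sub_eq_iff_eq_add.1 c3]; abel
  · rw [sub_eq_iff_eq_add.1 c4]

lemma covs_diff (hpa : p a = 0) (hpb : p b = 1) :
    e a b * Y a a = Y a a * e a b - Y a b ∧ e a b * Y a b = - (Y a b * e a b) ∧
    e a b * Y b a = - (Y b a * e a b) - Y a a + Y b b ∧ e a b * Y b b = Y b b * e a b - Y a b ∧
    e b a * Y a a = Y a a * e b a - Y b a ∧ e b a * Y b a = - (Y b a * e b a) ∧
    e b a * Y a b = - (Y a b * e b a) - Y b b + Y a a ∧ e b a * Y b b = Y b b * e b a - Y b a := by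
  have c := cov_Y hp he hu a b ha hb h
  have c' := cov_Y hp he hu b a hb ha h
  have c1 := c a a
  have c2 := c a b
  have c3 := c b a
  have c4 := c b b
  have d1 := c' a a
  have d2 := c' a b
  have d3 := c' b a
  have d4 := c' b b
  simp only [hab, hab.symm, if_true, if_false, mul_zero, sub_zero, hpa, hpb] at c1 c2 c3 c4 d1 d2 d3 d4
  norm_num at c1 c2 c3 c4 d1 d2 d3 d4
  refine ⟨c1, c2, ?_, ?_, ?_, ?_, ?_, ?_⟩
  · linear_combination (norm := abel) -c3
  · linear_combination (norm := abel) -c4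
  · linear_combination (norm := abel) d1
  · linear_combination (norm := abel) -d3
  · linear_combination (norm := abel) d2
  · linear_combination (norm := abel) -d4
end covs

lemma two_inv {R : Type} [Ring R] (Y : Matrix (Fin 2) (Fin 2) R) (q qi d : R) (hq : q = Y 0 0 - Y 0 1 * d * Y 1 0)
    (d1 : Y 1 1 * d = 1) (d2 : d * Y 1 1 = 1) (q1 : q * qi = 1) (q2 : qi * q = 1) :
    IsInv Y !![qi, -(qi * Y 0 1 * d); -(d * Y 1 0 * qi), d + d * Y 1 0 * qi * Y 0 1 * d] := by
  have d1' : ∀ x, Y 1 1 * (d * x) = x := fun x => by rw [← mul_assoc, d1, one_mul]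
  have d2' : ∀ x, d * (Y 1 1 * x) = x := fun x => by rw [← mul_assoc, d2, one_mul]
  have h0 : Y 0 0 = q + Y 0 1 * d * Y 1 0 := by rw [hq]; abel
  have q1' : ∀ x, q * (qi * x) = x := fun x => by rw [← mul_assoc, q1, one_mul]
  have q2' : ∀ x, qi * (q * x) = x := fun x => by rw [← mul_assoc, q2, one_mul]
  constructor <;> ext i j <;> fin_cases i <;> fin_cases j <;>
    simp [Matrix.mul_apply, Fin.sum_univ_two, h0, mul_add, add_mul, mul_assoc, d1, d2, q1, q2, d1', d2', q1', q2'] <;> abel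

section pairs
variable {R ι : Type} [Ring R] [DecidableEq ι] [Fintype ι] {p r : ι → ℕ} (hp : ∀ i, p i = 0 ∨ p i = 1)
    (hr : Function.Injective r)
    {e : ι → ι → R} (he : GLrel p e) (h2 : ∀ x y : R, x + x = y + y → x = y) {s : ℕ} {u : R} (hu : ∀ x, Commute u x)
    {a b : ι} (hb : r b = s) (ha : r a < s)
    {Y Y' W W' : Matrix ι ι R} (h : IsInv (Xs p r e (s+1) u) Y) (h' : IsInv (Xs p r e (s+1) (u-1)) Y')

include hp hr he hu ha hb h h'

lemma pair_ee (hW : IsInv (Xs p r e s u) W) (hpa : p a = 0) (hpb : p b = 0) :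
    Commute (e a b) (Y' b b * W a a) ∧ Commute (e b a) (Y' b b * W a a) := by
  have hu' : ∀ x, Commute (u - 1) x := fun x => (hu x).sub_left (Commute.one_left x)
  have hab : a ≠ b := by rintro rfl; omega
  have R1 := RTT_Y hp he hu h h'
  have r1 := R1 ⟨a, by omega⟩ ⟨b, by omega⟩ ⟨b, by omega⟩ ⟨b, by omega⟩
  have r2 := R1 ⟨a, by omega⟩ ⟨a, by omega⟩ ⟨b, by omega⟩ ⟨a, by omega⟩
  simp [hpa, hpb, sub_eq_zero] at r1 r2
  have hq : Y' b b * W a a = Y' b b * Y a a - Y' a b * Y b a := by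
    rw [schur_W hr hb h hW a a ha ha, mul_sub, ← mul_assoc, ← mul_assoc, ← r1, mul_assoc (Y' a b), schur_d2 hr hb h hW, mul_one]
  rw [hq]
  obtain ⟨c1, c2, c3, c4⟩ := covs_same hp he hu (by omega : r a < s + 1) (by omega : r b < s + 1) hab h (hpa.trans hpb.symm)
  obtain ⟨f1, f2, f3, f4⟩ := covs_same hp he hu (by omega : r b < s + 1) (by omega : r a < s + 1) hab.symm h (hpb.trans hpa.symm)
  obtain ⟨c1', c2', c3', c4'⟩ := covs_same hp he hu' (by omega : r a < s + 1) (by omega : r b < s + 1) hab h' (hpa.trans hpb.symm)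
  obtain ⟨f1', f2', f3', f4'⟩ := covs_same hp he hu' (by omega : r b < s + 1) (by omega : r a < s + 1) hab.symm h' (hpb.trans hpa.symm)
  constructor
  · show _ = _
    rw [mul_sub, dmul c4' c1, dmul c2' c3]
    linear_combination (norm := noncomm_ring) r1
  · show _ = _
    rw [mul_sub, dmul f1' f4, dmul f3' f2]
    linear_combination (norm := noncomm_ring) r2

include h2

lemma pair_oo (hW : IsInv (Xs p r e s (u-1)) W') (hpa : p a = 1) (hpb : p b = 1) :
    Commute (e a b) (W' a a * Y b b) ∧ Commute (e b a) (W' a a * Y b b) := by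
  have hu' : ∀ x, Commute (u - 1) x := fun x => (hu x).sub_left (Commute.one_left x)
  have hab : a ≠ b := by rintro rfl; omega
  have R1 := RTT_Y hp he hu h h'
  have r1 := R1 ⟨a, by omega⟩ ⟨a, by omega⟩ ⟨a, by omega⟩ ⟨b, by omega⟩
  have r2 := R1 ⟨a, by omega⟩ ⟨b, by omega⟩ ⟨a, by omega⟩ ⟨a, by omega⟩
  have r3 := R1 ⟨b, by omega⟩ ⟨a, by omega⟩ ⟨b, by omega⟩ ⟨b, by omega⟩
  have r4 := R1 ⟨b, by omega⟩ ⟨b, by omega⟩ ⟨b, by omega⟩ ⟨a, by omega⟩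
  norm_num [hpa, hpb] at r1 r2 r3 r4
  have s1 : Y' a a * Y a b = Y' a b * Y a a := h2 _ _ (by rw [r1, r2]; abel)
  have s2 : Y' b a * Y b b = Y' b b * Y b a := h2 _ _ (by rw [r3, r4]; abel)
  have hq : W' a a * Y b b = Y' a a * Y b b - Y' a b * Y b a := by
    rw [schur_W hr hb h' hW a a ha ha, sub_mul, mul_assoc _ (Y' b a), s2, mul_assoc (Y' a b),
      ← mul_assoc (dS p r e s (u-1) W' b), schur_d1 hr hb h' hW, one_mul]
  rw [hq]
  obtain ⟨c1, c2, c3, c4⟩ := covs_same hp he hu (by omega : r a < s + 1) (by omega : r b < s + 1) hab h (hpa.trans hpb.symm)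
  obtain ⟨f1, f2, f3, f4⟩ := covs_same hp he hu (by omega : r b < s + 1) (by omega : r a < s + 1) hab.symm h (hpb.trans hpa.symm)
  obtain ⟨c1', c2', c3', c4'⟩ := covs_same hp he hu' (by omega : r a < s + 1) (by omega : r b < s + 1) hab h' (hpa.trans hpb.symm)
  obtain ⟨f1', f2', f3', f4'⟩ := covs_same hp he hu' (by omega : r b < s + 1) (by omega : r a < s + 1) hab.symm h' (hpb.trans hpa.symm)
  constructor
  · show _ = _
    rw [mul_sub, dmul c1' c4, dmul c2' c3]
    linear_combination (norm := noncomm_ring) s1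
  · show _ = _
    rw [mul_sub, dmul f4' f1, dmul f3' f2]
    linear_combination (norm := noncomm_ring) s2

lemma pair_eo (hW : IsInv (Xs p r e s u) W) (hW' : IsInv (Xs p r e s (u-1)) W') (hpa : p a = 0) (hpb : p b = 1)
    (qi qi' : R) (q1 : W a a * qi = 1) (q2 : qi * W a a = 1) (q1' : W' a a * qi' = 1) (q2' : qi' * W' a a = 1) :
    Commute (e a b) (qi * Y b b) ∧ Commute (e b a) (qi * Y b b) := by
  have hu' : ∀ x, Commute (u - 1) x := fun x => (hu x).sub_left (Commute.one_left x)
  have hab : a ≠ b := by rintro rfl; omega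
  have R1 := RTT_Y hp he hu h h'
  have r3 := R1 ⟨b, by omega⟩ ⟨a, by omega⟩ ⟨b, by omega⟩ ⟨b, by omega⟩
  have r4 := R1 ⟨b, by omega⟩ ⟨b, by omega⟩ ⟨b, by omega⟩ ⟨a, by omega⟩
  norm_num [hpa, hpb] at r3 r4
  have s2 : Y' b a * Y b b = Y' b b * Y b a := h2 _ _ (by rw [r3, r4]; abel)
  obtain ⟨c1, c2, c3, c4, f1, f2, f3, f4⟩ :=
    covs_diff hp he hu (by omega : r a < s + 1) (by omega : r b < s + 1) hab h hpa hpb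
  have hq := schur_W hr hb h hW a a ha ha
  have hq' := schur_W hr hb h' hW' a a ha ha
  have d1 := schur_d2 hr hb h hW
  have d2 := schur_d1 hr hb h hW
  have d1' := schur_d2 hr hb h' hW'
  have d2' := schur_d1 hr hb h' hW'
  generalize dS p r e s u W b = d at *
  generalize dS p r e s (u-1) W' b = d' at *
  let g : Fin 2 → {i // r i < s + 1} := ![⟨a, by omega⟩, ⟨b, by omega⟩]
  have R2 : RTT (fun i => p (g i)) (Y'.submatrix (fun i => (g i).1) (fun i => (g i).1))
    (Y.submatrix (fun i => (g i).1) (fun i => (g i).1)) := fun i j k l => R1 (g i) (g j) (g k) (g l)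
  have i1 := two_inv (Y.submatrix (fun i => (g i).1) (fun i => (g i).1)) (W a a) qi d hq d1 d2 q1 q2
  have i1' := two_inv (Y'.submatrix (fun i => (g i).1) (fun i => (g i).1)) (W' a a) qi' d' hq' d1' d2' q1' q2'
  have R3 := RTT_inv _ _ _ _ _ R2 i1'.1 i1'.2 i1.1 i1.2 0 0 1 0
  simp [g, hpa, hpb] at R3
  have k1 : Y b a * d = d' * Y' b a := by
    calc Y b a * d = d' * Y' b b * Y b a * d := by rw [d2', one_mul]
      _ = d' * (Y' b b * Y b a) * d := by rw [mul_assoc d']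
      _ = d' * Y' b a := by rw [← s2, mul_assoc, mul_assoc, d1, mul_one]
  have k2 : qi * (d' * Y' b a) = d * Y b a * qi := by
    have : (qi * (d' * Y' b a)) * qi' = (d * Y b a * qi) * qi' := by
      linear_combination (norm := noncomm_ring) -R3
    calc _ = (qi * (d' * Y' b a)) * qi' * W' a a := by rw [mul_assoc _ qi', q2', mul_one]
      _ = _ := by rw [this, mul_assoc _ qi', q2', mul_one]
  rw [← k1] at k2
  have ed : e a b * d = d * e a b + d * Y a b * d := by
    calc _ = d * (Y b b * e a b) * d := by rw [← mul_assoc, d2, one_mul]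
      _ = d * (e a b * Y b b + Y a b) * d := by rw [c4]; simp
      _ = d * e a b * (Y b b * d) + d * Y a b * d := by noncomm_ring
      _ = _ := by rw [d1, mul_one]
  have fd : e b a * d = d * e b a + d * Y b a * d := by
    calc _ = d * (Y b b * e b a) * d := by rw [← mul_assoc, d2, one_mul]
      _ = d * (e b a * Y b b + Y b a) * d := by rw [f4]; simp
      _ = d * e b a * (Y b b * d) + d * Y b a * d := by noncomm_ring
      _ = _ := by rw [d1, mul_one]
  have eq : e a b * W a a = W a a * e a b - Y a b * d * W a a := by
    calc e a b * W a a = e a b * Y a a - (e a b * Y a b) * d * Y b a := by rw [hq]; noncomm_ring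
      _ = Y a a * e a b - Y a b + Y a b * (e a b * d) * Y b a := by rw [c1, c2]; noncomm_ring
      _ = Y a a * e a b - Y a b + Y a b * d * (e a b * Y b a) + Y a b * d * Y a b * d * Y b a := by rw [ed]; noncomm_ring
      _ = Y a a * e a b - Y a b - Y a b * d * Y b a * e a b - Y a b * d * Y a a + Y a b * (d * Y b b)
          + Y a b * d * Y a b * d * Y b a := by rw [c3]; noncomm_ring
      _ = _ := by rw [d2, hq]; noncomm_ring
  have fq : e b a * W a a = W a a * e b a - W a a * d * Y b a := by
    calc e b a * W a a = e b a * Y a a - (e b a * Y a b) * d * Y b a := by rw [hq]; noncomm_ring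
      _ = Y a a * e b a - Y b a + Y a b * (e b a * d) * Y b a + (Y b b * d) * Y b a - Y a a * d * Y b a := by
        rw [f1, f3]; noncomm_ring
      _ = Y a a * e b a - Y b a + Y a b * d * (e b a * Y b a) + Y a b * d * Y b a * d * Y b a + (Y b b * d) * Y b a - Y a a * d * Y b a := by
        rw [fd]; noncomm_ring
      _ = _ := by rw [f2, d1, hq]; noncomm_ring
  have eqi : e a b * qi = qi * e a b + qi * Y a b * d := by
    calc _ = qi * (W a a * e a b) * qi := by rw [← mul_assoc, q2, one_mul]
      _ = qi * (e a b * W a a + Y a b * d * W a a) * qi := by rw [eq]; simp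
      _ = qi * e a b * (W a a * qi) + qi * Y a b * d * (W a a * qi) := by noncomm_ring
      _ = _ := by rw [q1, mul_one, mul_one]
  have fqi : e b a * qi = qi * e b a + d * Y b a * qi := by
    calc _ = qi * (W a a * e b a) * qi := by rw [← mul_assoc, q2, one_mul]
      _ = qi * (e b a * W a a + W a a * d * Y b a) * qi := by rw [fq]; simp
      _ = qi * e b a * (W a a * qi) + (qi * W a a) * d * Y b a * qi := by noncomm_ring
      _ = _ := by rw [q1, q2, mul_one, one_mul]
  constructor
  · show _ = _
    calc _ = (e a b * qi) * Y b b := by rw [mul_assoc]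
      _ = qi * (e a b * Y b b) + qi * Y a b * (d * Y b b) := by rw [eqi]; noncomm_ring
      _ = _ := by rw [c4, d2]; noncomm_ring
  · show _ = _
    calc _ = (e b a * qi) * Y b b := by rw [mul_assoc]
      _ = qi * (e b a * Y b b) + (d * Y b a * qi) * Y b b := by rw [fqi]; noncomm_ring
      _ = qi * (e b a * Y b b) + qi * Y b a * (d * Y b b) := by rw [← k2]; noncomm_ring
      _ = _ := by rw [f4, d2]; noncomm_ring
end pairs


lemma ofFn_two {R : Type} [Ring R] : ∀ (N t : ℕ) (h : t + 1 < N) (g0 : Fin N → R), ∃ L Q : R, ∀ g : Fin N → R,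
    (∀ i : Fin N, i.1 ≠ t → i.1 ≠ t + 1 → g i = g0 i) →
    (List.ofFn g).prod = L * (g ⟨t, by omega⟩ * g ⟨t+1, h⟩) * Q
  | 0, t, h, _ => absurd h (by omega)
  | 1, t, h, _ => absurd h (by omega)
  | N+2, 0, h, g0 => by
    refine ⟨1, (List.ofFn fun i : Fin N => g0 i.succ.succ).prod, fun g hg => ?_⟩
    rw [List.ofFn_succ, List.ofFn_succ, List.prod_cons, List.prod_cons, one_mul, ← mul_assoc]
    congr 1
    congr 2
    funext i
    exact hg _ (by simp) (by simp)
  | N+2, t+1, h, g0 => by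
    obtain ⟨L, Q, H⟩ := ofFn_two (N+1) t (by omega) (fun i => g0 i.succ)
    refine ⟨g0 0 * L, Q, fun g hg => ?_⟩
    rw [List.ofFn_succ, List.prod_cons, H (fun i => g i.succ) (fun i h1 h2 => hg _ (by simpa using h1) (by simpa using h2)),
      hg 0 (by simp) (by simp)]
    simp only [mul_assoc]
    rfl

section alt
variable {R κ : Type} [Ring R] (h2 : ∀ x y : R, x + x = y + y → x = y)

def Falt {N : ℕ} (B : ℕ → Fin N → κ → R) (c : Fin N → κ) : R :=
  ∑ σ : Equiv.Perm (Fin N), ((Equiv.Perm.sign σ : ℤˣ) : ℤ) • (List.ofFn fun t : Fin N => B t (σ t) (c t)).prod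

def Manin {α : Type} (B : ℕ → α → κ → R) (N : ℕ) : Prop := ∀ t, t + 1 < N → ∀ i k j l,
  B t i j * B (t+1) k l - B t k j * B (t+1) i l + B t i l * B (t+1) k j - B t k l * B (t+1) i j = 0

include h2 in
lemma Falt_adj {N : ℕ} (B : ℕ → Fin (N+1) → κ → R) (hB : Manin B (N+1)) (c : Fin (N+1) → κ) (t : Fin N) :
    Falt B (c ∘ Equiv.swap t.castSucc t.succ) = - Falt B c := by
  rw [eq_neg_iff_add_eq_zero]
  apply h2
  rw [add_zero]
  have hsum : ∀ f : Equiv.Perm (Fin (N+1)) → R, ∑ σ, f σ = ∑ σ, f (σ * Equiv.swap t.castSucc t.succ) := fun f =>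
    (Equiv.sum_comp (Equiv.mulRight (Equiv.swap t.castSucc t.succ)) f).symm
  have hne : t.castSucc ≠ t.succ := (Fin.castSucc_lt_succ).ne
  unfold Falt
  rw [← Finset.sum_add_distrib]
  conv_lhs => enter [2]; rw [hsum]
  rw [← Finset.sum_add_distrib]
  refine Finset.sum_eq_zero fun σ _ => ?_
  rw [Equiv.Perm.sign_mul, Equiv.Perm.sign_swap hne, ← smul_add, ← smul_add, mul_neg, mul_one, Units.val_neg, neg_smul,
    ← smul_neg, ← smul_add]
  obtain ⟨L, Q, H⟩ := ofFn_two (N+1) t.1 (by omega) (fun s => B s (σ s) (c s))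
  have hs : ∀ i : Fin (N+1), i.1 ≠ t.1 → i.1 ≠ t.1 + 1 → Equiv.swap t.castSucc t.succ i = i := fun i h1 h2 =>
    Equiv.swap_apply_of_ne_of_ne (fun h => h1 (by rw [h]; rfl)) (fun h => h2 (by rw [h]; rfl))
  rw [H, H, H, H]
  · have e1 : (⟨t.1, by omega⟩ : Fin (N+1)) = t.castSucc := rfl
    have e2 : (⟨t.1+1, by omega⟩ : Fin (N+1)) = t.succ := rfl
    simp only [Function.comp, e1, e2, Equiv.swap_apply_left, Equiv.swap_apply_right, Equiv.Perm.mul_apply]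
    have := hB t.1 (by omega) (σ t.castSucc) (σ t.succ) (c t.castSucc) (c t.succ)
    convert smul_zero _
    have h9 := congrArg (fun x => L * x * Q) this
    simp only [mul_zero, zero_mul] at h9
    rw [← h9]; noncomm_ring
  all_goals
    intro i h1 h2
    simp [hs i h1 h2]

include h2 in
lemma Falt_perm {N : ℕ} (B : ℕ → Fin (N+1) → κ → R) (hB : Manin B (N+1)) (π : Equiv.Perm (Fin (N+1))) :
    ∀ (c : Fin (N+1) → κ), Falt B (c ∘ π) = ((Equiv.Perm.sign π : ℤˣ) : ℤ) • Falt B c := by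
  have : π ∈ Submonoid.closure (Set.range fun i : Fin N => Equiv.swap i.castSucc i.succ) := by
    rw [Equiv.Perm.mclosure_swap_castSucc_succ]; trivial
  induction this using Submonoid.closure_induction with
  | mem x hx =>
    obtain ⟨i, rfl⟩ := hx
    intro c
    rw [Falt_adj h2 B hB, Equiv.Perm.sign_swap (Fin.castSucc_lt_succ).ne]
    simp
  | one => intro c; simp
  | mul x y _ _ hx hy =>
    intro c
    rw [Equiv.Perm.coe_mul, ← Function.comp_assoc, hy, hx, smul_smul, Equiv.Perm.sign_mul, Units.val_mul, mul_comm]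

include h2 in
lemma Falt_zero {N : ℕ} (B : ℕ → Fin (N+1) → κ → R) (hB : Manin B (N+1)) (c : Fin (N+1) → κ) (a b : Fin (N+1))
    (hab : a ≠ b) (hc : c a = c b) : Falt B c = 0 := by
  have h := Falt_perm h2 B hB (Equiv.swap a b) c
  have : c ∘ Equiv.swap a b = c := by
    funext x
    rcases eq_or_ne x a with rfl | h1
    · simp [hc]
    · rcases eq_or_ne x b with rfl | h3
      · simp [hc]
      · simp [Equiv.swap_apply_of_ne_of_ne h1 h3]
  rw [this, Equiv.Perm.sign_swap hab] at h
  apply h2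
  nth_rw 1 [h]
  simp

def cdet (N : ℕ) (A : ℕ → ℕ → ℕ → R) : R :=
  ∑ σ : Equiv.Perm (Fin N), ((Equiv.Perm.sign σ : ℤˣ) : ℤ) • (List.ofFn fun t : Fin N => A t (σ t) t).prod

def Manin3 (A : ℕ → ℕ → ℕ → R) (N : ℕ) : Prop := ∀ t, t + 1 < N → ∀ i k j l, i < N → k < N → j < N → l < N →
  A t i j * A (t+1) k l - A t k j * A (t+1) i l + A t i l * A (t+1) k j - A t k l * A (t+1) i j = 0

include h2 in
lemma cdet_rep {N : ℕ} (A : ℕ → ℕ → ℕ → R) (hA : Manin3 A (N+1)) (x l : Fin (N+1)) (hxl : x ≠ l) :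
    ∑ σ : Equiv.Perm (Fin (N+1)), ((Equiv.Perm.sign σ : ℤˣ) : ℤ) •
      (List.ofFn fun t : Fin (N+1) => A t (σ t) (if t = x then l else t)).prod = 0 := by
  have := Falt_zero h2 (fun t (i j : Fin (N+1)) => A t i j) (fun t ht i k j l => hA t ht i k j l i.2 k.2 j.2 l.2)
    (fun t => if t = x then l else t) x l hxl (by simp)
  rw [← this, Falt]
  refine Finset.sum_congr rfl fun σ _ => ?_
  congr 3
  funext t
  split_ifs <;> rfl

include h2 in
lemma cdet_first {N : ℕ} (A : ℕ → ℕ → ℕ → R) (hA : Manin3 A (N+1)) (z : Fin (N+1) → R) (q : R) (hz : z 0 = 1)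
    (hq : ∀ i : Fin (N+1), ∑ l, z l * A 0 i l = if i = 0 then q else 0) :
    cdet (N+1) A = q * cdet N (fun t i j => A (t+1) (i+1) (j+1)) := by
  have h1 : cdet (N+1) A = ∑ l : Fin (N+1), z l * ∑ σ : Equiv.Perm (Fin (N+1)), ((Equiv.Perm.sign σ : ℤˣ) : ℤ) •
      (List.ofFn fun t : Fin (N+1) => A t (σ t) (if t = 0 then l else t)).prod := by
    rw [Finset.sum_eq_single 0]
    · rw [hz, one_mul, cdet]
      refine Finset.sum_congr rfl fun σ _ => ?_
      congr 3
      funext t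
      split_ifs with h <;> simp [h]
    · intro l _ hl
      rw [cdet_rep h2 A hA 0 l hl.symm, mul_zero]
    · simp
  rw [h1]
  simp only [Finset.mul_sum]
  rw [Finset.sum_comm]
  have h3 : ∀ σ : Equiv.Perm (Fin (N+1)), ∑ l : Fin (N+1), z l * ((Equiv.Perm.sign σ : ℤˣ) : ℤ) •
      (List.ofFn fun t : Fin (N+1) => A t (σ t) (if t = 0 then l else t)).prod =
      ((Equiv.Perm.sign σ : ℤˣ) : ℤ) • ((if σ 0 = 0 then q else 0) * (List.ofFn fun t : Fin N => A (t+1) (σ t.succ) (t+1)).prod) := by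
    intro σ
    simp only [mul_smul_comm, ← Finset.smul_sum]
    congr 1
    rw [← hq, Finset.sum_mul]
    refine Finset.sum_congr rfl fun l _ => ?_
    rw [List.ofFn_succ, List.prod_cons, mul_assoc]
    simp
  rw [Finset.sum_congr rfl fun σ _ => h3 σ, ← Equiv.sum_comp (Equiv.Perm.decomposeFin.symm), Fintype.sum_prod_type,
    Finset.sum_eq_single 0]
  · rw [cdet, Finset.mul_sum]
    refine Finset.sum_congr rfl fun σ _ => ?_
    simp [Equiv.Perm.decomposeFin.symm_sign]
    exact (Int.cast_commute _ _).left_comm _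
  · intro l _ hl
    refine Finset.sum_eq_zero fun σ _ => ?_
    simp [hl]
  · simp

include h2 in
lemma cdet_last {N : ℕ} (A : ℕ → ℕ → ℕ → R) (hA : Manin3 A (N+1)) (z : Fin (N+1) → R)
    (hq : ∀ i : Fin (N+1), ∑ l : Fin (N+1), A N i l * z l = if i = Fin.last N then 1 else 0) :
    cdet (N+1) A * z (Fin.last N) = cdet N A := by
  have h1 : cdet (N+1) A * z (Fin.last N) = ∑ l : Fin (N+1), (∑ σ : Equiv.Perm (Fin (N+1)), ((Equiv.Perm.sign σ : ℤˣ) : ℤ) •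
      (List.ofFn fun t : Fin (N+1) => A t (σ t) (if t = Fin.last N then l else t)).prod) * z l := by
    rw [Finset.sum_eq_single (Fin.last N)]
    · rw [cdet]
      congr 1
      refine Finset.sum_congr rfl fun σ _ => ?_
      congr 3
      funext t
      split_ifs with h <;> simp [h]
    · intro l _ hl
      rw [cdet_rep h2 A hA _ l hl.symm, zero_mul]
    · simp
  rw [h1]
  simp only [Finset.sum_mul]
  rw [Finset.sum_comm]
  have h3 : ∀ σ : Equiv.Perm (Fin (N+1)), ∑ l : Fin (N+1), ((Equiv.Perm.sign σ : ℤˣ) : ℤ) •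
      (List.ofFn fun t : Fin (N+1) => A t (σ t) (if t = Fin.last N then l else t)).prod * z l =
      ((Equiv.Perm.sign σ : ℤˣ) : ℤ) • ((List.ofFn fun t : Fin N => A t (σ t.castSucc) t).prod * (if σ (Fin.last N) = Fin.last N then 1 else 0)) := by
    intro σ
    simp only [smul_mul_assoc, ← Finset.smul_sum]
    congr 1
    rw [← hq, Finset.mul_sum]
    refine Finset.sum_congr rfl fun l _ => ?_
    rw [List.ofFn_succ', List.concat_eq_append, List.prod_append, List.prod_singleton, ← mul_assoc]
    congr 2
    · congr 2
      funext t
      simp [t.castSucc_lt_last.ne]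
    · simp
  rw [Finset.sum_congr rfl fun σ _ => h3 σ, ← Equiv.sum_comp (finSuccEquivLast.permCongr.symm), ← Equiv.sum_comp (Equiv.Perm.decomposeOption.symm),
    Fintype.sum_prod_type, Finset.sum_eq_single none]
  · rw [cdet]
    refine Finset.sum_congr rfl fun σ _ => ?_
    simp [Equiv.permCongr_apply, Equiv.permCongr_symm]
  · intro l _ hl
    refine Finset.sum_eq_zero fun σ _ => ?_
    simp [hl]
    intro h
    exact absurd (by simpa using congrArg finSuccEquivLast h) hl
  · simp
end alt


def rI {m n : ℕ} : Ind m n → ℕ := Sum.elim (fun k => k.1) (fun k => m + k.1)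

lemma rI_inj {m n : ℕ} : Function.Injective (rI (m := m) (n := n)) := by
  rintro (a | a) (b | b) h <;> simp [rI] at h
  · rw [Fin.ext h]
  · have := a.2; omega
  · have := b.2; omega
  · rw [Fin.ext h]

lemma pI_or {m n : ℕ} (i : Ind m n) : pI i = 0 ∨ pI i = 1 := by
  rcases i with i | i <;> simp [pI]

lemma comm_inv {R : Type} [Ring R] {x y d : R} (h1 : y * d = 1) (h2 : d * y = 1) (h : Commute x y) : Commute x d := by
  show x * d = d * x
  calc x * d = d * (y * x) * d := by rw [← mul_assoc, h2, one_mul]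
    _ = d * x := by rw [← h.eq, mul_assoc, mul_assoc, h1, mul_one]

lemma comm_ofFn {R : Type} [Ring R] (x : R) : ∀ (N t : ℕ) (h : t + 1 < N) (g : Fin N → R),
    (∀ i : Fin N, i.1 ≠ t → i.1 ≠ t + 1 → Commute x (g i)) → Commute x (g ⟨t, by omega⟩ * g ⟨t+1, h⟩) →
    Commute x (List.ofFn g).prod
  | 0, t, h, _ => absurd h (by omega)
  | 1, t, h, _ => absurd h (by omega)
  | N+2, 0, h, g => fun h1 h2 => by
    rw [List.ofFn_succ, List.ofFn_succ, List.prod_cons, List.prod_cons, ← mul_assoc]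
    refine Commute.mul_right h2 (Commute.list_prod_right _ _ fun y hy => ?_)
    obtain ⟨i, rfl⟩ := List.mem_ofFn.1 hy
    exact h1 _ (by simp) (by simp)
  | N+2, t+1, h, g => fun h1 h2 => by
    rw [List.ofFn_succ, List.prod_cons]
    refine Commute.mul_right (h1 0 (by simp) (by simp)) (comm_ofFn x (N+1) t (by omega) (fun i => g i.succ) ?_ h2)
    intro i h3 h4
    exact h1 _ (by simpa using h3) (by simpa using h4)

section gauss
variable {R : Type} [Ring R] {m n : ℕ} {e : Ind m n → Ind m n → R} (he : GLrel pI e)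
  (h2 : ∀ x y : R, x + x = y + y → x = y) {T : R} (hT : ∀ x, Commute T x) {Yf : ℕ → ℤ → Matrix (Ind m n) (Ind m n) R}
  (hY : ∀ s (c : ℤ), IsInv (Xs pI rI e s (T + (c : R))) (Yf s c))

def ga (e : Ind m n → Ind m n → R) (T : R) (Yf : ℕ → ℤ → Matrix (Ind m n) (Ind m n) R) : Ind m n → R :=
  Sum.elim (fun k => dS pI rI e k.1 (T + ((-(k.1 : ℤ) : ℤ) : R)) (Yf k.1 (-(k.1 : ℤ))) (Sum.inl k))
    (fun j => Yf (m + j.1 + 1) (-(m : ℤ) + 1 + j.1) (Sum.inr j) (Sum.inr j))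

include hT in
lemma hTc (c : ℤ) (x : R) : Commute (T + (c : R)) x := (hT x).add_left (Int.cast_commute c x)

include he h2 hT hY

lemma ga_comm_adj (a b : Ind m n) (hab : rI b = rI a + 1) :
    Commute (e a b) (ga e T Yf a * ga e T Yf b) ∧ Commute (e b a) (ga e T Yf a * ga e T Yf b) := by
  have key : ∀ c : ℤ, T + ((c - 1 : ℤ) : R) = T + (c : R) - 1 := fun c => by push_cast; abel
  rcases a with a | a <;> rcases b with b | b
  · have hba : b.1 = a.1 + 1 := hab
    have hY1 := hY (b.1 + 1) (-(a.1 : ℤ))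
    have hY2 := hY (b.1 + 1) (-(a.1 : ℤ) - 1)
    have hW := hY b.1 (-(a.1 : ℤ))
    have hW0 := hY a.1 (-(a.1 : ℤ))
    have hb0 := hY b.1 (-(a.1 : ℤ) - 1)
    rw [key] at hY2 hb0
    have P := pair_ee pI_or rI_inj he (hTc hT _) (rfl : rI (Sum.inl b : Ind m n) = b.1)
      (show rI (Sum.inl a : Ind m n) < b.1 by simp [rI]; omega) hY1 hY2 hW rfl rfl
    rw [hba] at hW
    have e1 : ga e T Yf (Sum.inl b) = dS pI rI e b.1 (T + ((-(a.1 : ℤ) : ℤ) : R) - 1) (Yf b.1 (-(a.1 : ℤ) - 1)) (Sum.inl b) := by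
      have e0 : -(b.1 : ℤ) = -(a.1 : ℤ) - 1 := by rw [hba]; push_cast; ring
      simp only [ga, Sum.elim_inl]
      rw [e0, key]
    have x1 := schur_d1 rI_inj rfl hY2 hb0 (b := (Sum.inl b : Ind m n)) (s := b.1)
    have x2 := schur_d2 rI_inj rfl hY2 hb0 (b := (Sum.inl b : Ind m n)) (s := b.1)
    have x3 := schur_d1 rI_inj rfl hW hW0 (b := (Sum.inl a : Ind m n)) (s := a.1)
    have x4 := schur_d2 rI_inj rfl hW hW0 (b := (Sum.inl a : Ind m n)) (s := a.1)
    rw [← e1] at x1 x2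
    rw [← hba] at x3 x4
    change ga e T Yf (Sum.inl a) * _ = 1 at x3
    change _ * ga e T Yf (Sum.inl a) = 1 at x4
    generalize ga e T Yf (Sum.inl a) = g1 at *
    generalize ga e T Yf (Sum.inl b) = g2 at *
    refine ⟨comm_inv ?_ ?_ P.1, comm_inv ?_ ?_ P.2⟩
    all_goals first
      | rw [mul_assoc, ← mul_assoc _ g1, x4, one_mul, x2]
      | rw [mul_assoc, ← mul_assoc g2, x1, one_mul, x3]
  · have hba : m + b.1 = a.1 + 1 := hab
    have hb : b.1 = 0 := by have := a.2; omega
    have hm : m = a.1 + 1 := by omega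
    have ec : -(m : ℤ) + 1 + b.1 = -(a.1 : ℤ) := by omega
    have hY1 := hY (m + b.1 + 1) (-(a.1 : ℤ))
    have hY2 := hY (m + b.1 + 1) (-(a.1 : ℤ) - 1)
    have hW := hY (m + b.1) (-(a.1 : ℤ))
    have hW' := hY (m + b.1) (-(a.1 : ℤ) - 1)
    have hW0 := hY a.1 (-(a.1 : ℤ))
    have hW0' := hY a.1 (-(a.1 : ℤ) - 1)
    rw [key] at hY2 hW' hW0'
    have P := pair_eo pI_or rI_inj he h2 (hTc hT _) (rfl : rI (Sum.inr b : Ind m n) = m + b.1)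
      (show rI (Sum.inl a : Ind m n) < m + b.1 by simp [rI]; omega) hY1 hY2 hW hW' rfl rfl
    rw [hba] at hW hW'
    have x3 := schur_d1 rI_inj rfl hW hW0 (b := (Sum.inl a : Ind m n)) (s := a.1)
    have x4 := schur_d2 rI_inj rfl hW hW0 (b := (Sum.inl a : Ind m n)) (s := a.1)
    have y3 := schur_d1 rI_inj rfl hW' hW0' (b := (Sum.inl a : Ind m n)) (s := a.1)
    have y4 := schur_d2 rI_inj rfl hW' hW0' (b := (Sum.inl a : Ind m n)) (s := a.1)
    rw [← hba] at x3 x4 y3 y4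
    have := P _ _ x4 x3 y4 y3
    simp only [ga, Sum.elim_inl, Sum.elim_inr]
    rw [ec]
    exact this
  · have hba : b.1 = m + a.1 + 1 := hab
    have := b.2; omega
  · have hba : m + b.1 = m + a.1 + 1 := hab
    have ec : -(m : ℤ) + 1 + a.1 = (-(m : ℤ) + 1 + b.1) - 1 := by
      have : b.1 = a.1 + 1 := by omega
      rw [this]; push_cast; ring
    have hY1 := hY (m + b.1 + 1) (-(m : ℤ) + 1 + b.1)
    have hY2 := hY (m + b.1 + 1) (-(m : ℤ) + 1 + b.1 - 1)
    have hW' := hY (m + b.1) (-(m : ℤ) + 1 + b.1 - 1)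
    rw [key] at hY2 hW'
    have P := pair_oo pI_or rI_inj he h2 (hTc hT _) (rfl : rI (Sum.inr b : Ind m n) = m + b.1)
      (show rI (Sum.inr a : Ind m n) < m + b.1 by simp [rI]; omega) hY1 hY2 hW' rfl rfl
    simp only [ga, Sum.elim_inr]
    rw [ec, ← hba]
    exact P

omit h2 in
lemma ga_comm_far (a b c : Ind m n) (h : (rI c < rI a ∧ rI c < rI b) ∨ (rI a < rI c ∧ rI b < rI c)) :
    Commute (e a b) (ga e T Yf c) := by
  have key : ∀ k : ℤ, Commute (e a b) (Yf (rI c + 1) k c c) := by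
    intro k
    rcases h with h | h
    · exact cov_Y_hi pI_or he (hTc hT _) a b (by omega) (by omega) (hY _ _) c
    · exact cov_Y_lo pI_or he (hTc hT _) a b (by omega) (by omega) (hY _ _) c (by rintro rfl; omega) (by rintro rfl; omega)
  rcases c with c | c
  · exact comm_inv (schur_d2 rI_inj rfl (hY _ _) (hY _ _)) (schur_d1 rI_inj rfl (hY _ _) (hY _ _)) (key (-(c.1 : ℤ)))
  · exact key _

omit h2 in
lemma ga_comm_diag (a c : Ind m n) : Commute (e a a) (ga e T Yf c) := by
  have key : ∀ k : ℤ, Commute (e a a) (Yf (rI c + 1) k c c) := fun k =>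
    cov_Y_diag pI_or he (hTc hT _) a (hY _ _) c
  rcases c with c | c
  · exact comm_inv (schur_d2 rI_inj rfl (hY _ _) (hY _ _)) (schur_d1 rI_inj rfl (hY _ _) (hY _ _)) (key (-(c.1 : ℤ)))
  · exact key _

end gauss


lemma pI_inl {m n : ℕ} (i : Fin m) : pI (Sum.inl i : Ind m n) = 0 := rfl
lemma pI_inr {m n : ℕ} (i : Fin n) : pI (Sum.inr i : Ind m n) = 1 := rfl

lemma rI_fin {m n : ℕ} (i : Ind m n) : rI i = (finSumFinEquiv i).1 := by
  rcases i with i | i <;> simp [rI]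

lemma comm_sgn {R : Type} [Ring R] (x : R) (k : ℕ) : Commute x ((-1 : R) ^ k) := (Commute.neg_one_right x).pow_right k

section gauss
variable {R : Type} [Ring R] {m n : ℕ} {e : Ind m n → Ind m n → R} (he : GLrel pI e)
  (h2 : ∀ x y : R, x + x = y + y → x = y) {T : R} (hT : ∀ x, Commute T x) {Yf : ℕ → ℤ → Matrix (Ind m n) (Ind m n) R}
  (hY : ∀ s (c : ℤ), IsInv (Xs pI rI e s (T + (c : R))) (Yf s c))

include he h2 hT hY

lemma gC_adj (a b : Ind m n) (hab : rI b = rI a + 1) :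
    Commute (e a b) (List.ofFn fun k : Fin (m+n) => ga e T Yf (finSumFinEquiv.symm k)).prod ∧
    Commute (e b a) (List.ofFn fun k : Fin (m+n) => ga e T Yf (finSumFinEquiv.symm k)).prod := by
  have hb := (finSumFinEquiv b).2
  have e1 : finSumFinEquiv.symm ⟨rI a, by rw [rI_fin]; exact (finSumFinEquiv a).2⟩ = a := by
    rw [Equiv.symm_apply_eq]; exact Fin.ext (rI_fin a)
  have e2 : finSumFinEquiv.symm ⟨rI a + 1, by rw [← hab, rI_fin]; exact hb⟩ = b := by
    rw [Equiv.symm_apply_eq]; exact Fin.ext (hab.symm.trans (rI_fin b))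
  have P := ga_comm_adj he h2 hT hY a b hab
  have hfar : ∀ i : Fin (m+n), i.1 ≠ rI a → i.1 ≠ rI a + 1 →
     (rI (finSumFinEquiv.symm i) < rI a ∧ rI (finSumFinEquiv.symm i) < rI b) ∨
     (rI a < rI (finSumFinEquiv.symm i) ∧ rI b < rI (finSumFinEquiv.symm i)) := by
    intro i h1 h2
    have : rI (finSumFinEquiv.symm i) = i.1 := by rw [rI_fin]; simp
    omega
  constructor
  · refine comm_ofFn _ _ (rI a) (by rw [← hab, rI_fin]; exact hb) _ (fun i h1 h2 => ?_) ?_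
    · exact ga_comm_far he hT hY _ _ _ (hfar i h1 h2)
    · simp only [e1, e2]; exact P.1
  · refine comm_ofFn _ _ (rI a) (by rw [← hab, rI_fin]; exact hb) _ (fun i h1 h2 => ?_) ?_
    · exact ga_comm_far he hT hY _ _ _ ((hfar i h1 h2).imp (fun h => ⟨h.2, h.1⟩) (fun h => ⟨h.2, h.1⟩))
    · simp only [e1, e2]; exact P.2

omit h2 in
lemma gC_diag (a : Ind m n) :
    Commute (e a a) (List.ofFn fun k : Fin (m+n) => ga e T Yf (finSumFinEquiv.symm k)).prod := by
  refine Commute.list_prod_right _ _ fun y hy => ?_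
  obtain ⟨i, rfl⟩ := List.mem_ofFn.1 hy
  exact ga_comm_diag he hT hY _ _

omit h2 hT hY in
lemma comm_step (x : R) (a b c : Ind m n) (hab : a ≠ b) (h1 : Commute (e a c) x) (h3 : Commute (e c b) x) : Commute (e a b) x := by
  have := he a c c b
  rw [if_pos rfl, if_neg hab.symm, mul_zero, sub_zero] at this
  rw [← this]
  exact (h1.mul_left h3).sub_left ((comm_sgn _ _).symm.mul_left (h3.mul_left h1))

lemma gC_all (a b : Ind m n) :
    Commute (e a b) (List.ofFn fun k : Fin (m+n) => ga e T Yf (finSumFinEquiv.symm k)).prod := by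
  have key : ∀ d (a b : Ind m n), rI b = rI a + d + 1 →
    Commute (e a b) (List.ofFn fun k : Fin (m+n) => ga e T Yf (finSumFinEquiv.symm k)).prod ∧
    Commute (e b a) (List.ofFn fun k : Fin (m+n) => ga e T Yf (finSumFinEquiv.symm k)).prod := by
    intro d
    induction d with
    | zero => intro a b h; exact gC_adj he h2 hT hY a b h
    | succ d ih =>
      intro a b h
      have hb := (finSumFinEquiv b).2
      rw [← rI_fin] at hb
      have hc : rI (finSumFinEquiv.symm ⟨rI a + d + 1, by omega⟩ : Ind m n) = rI a + d + 1 := by rw [rI_fin]; simp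
      generalize finSumFinEquiv.symm (⟨rI a + d + 1, by omega⟩ : Fin (m+n)) = c at hc
      have x1 := ih a c hc
      have x2 := gC_adj he h2 hT hY c b (by omega)
      have hab : a ≠ b := by rintro rfl; omega
      exact ⟨comm_step he _ a b c hab x1.1 x2.1, comm_step he _ b a c hab.symm x2.2 x1.2⟩
  rcases lt_trichotomy (rI a) (rI b) with h | h | h
  · exact (key (rI b - rI a - 1) a b (by omega)).1
  · rw [rI_inj h]; exact gC_diag he hT hY b
  · exact (key (rI a - rI b - 1) b a (by omega)).2

omit he h2 hT hY
def ex1 (G : Matrix (Ind m n) (Ind m n) R) (i j : ℕ) : R :=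
  if h : i < m ∧ j < m then G (Sum.inl ⟨i, h.1⟩) (Sum.inl ⟨j, h.2⟩) else 0
def ex2 (G : Matrix (Ind m n) (Ind m n) R) (i j : ℕ) : R :=
  if h : i < n ∧ j < n then G (Sum.inr ⟨i, h.1⟩) (Sum.inr ⟨j, h.2⟩) else 0

def A1 (e : Ind m n → Ind m n → R) (T : R) (t : ℕ) : ℕ → ℕ → R :=
  ex1 (Xs pI rI e (m+n) (T + ((-(t : ℤ) : ℤ) : R)))
def A2 (Yf : ℕ → ℤ → Matrix (Ind m n) (Ind m n) R) (t : ℕ) (i j : ℕ) : R :=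
  ex2 (Yf (m+n) (-(m : ℤ) + 1 + t)) j i

lemma rI_lt (i : Ind m n) : rI i < m + n := by rw [rI_fin]; exact (finSumFinEquiv i).2

include he hT in
lemma A1_manin (N : ℕ) (hN : N ≤ m) : Manin3 (A1 e T) N := by
  intro t ht i k j l hi hk hj hl
  have hX : ∀ u, Xs pI rI e (m+n) u = Xmat pI e u := by
    intro u; ext i j; simp [Xs, Xmat, rI_lt, Emat]
  have h := RTT_X pI pI_or e he _ (hTc hT (-(t : ℤ)))
  have e1 : T + ((-((t + 1 : ℕ) : ℤ) : ℤ) : R) = T + ((-(t : ℤ) : ℤ) : R) - 1 := by push_cast; abel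
  have c1 := h (Sum.inl ⟨i, by omega⟩) (Sum.inl ⟨j, by omega⟩) (Sum.inl ⟨k, by omega⟩) (Sum.inl ⟨l, by omega⟩)
  have c2 := h (Sum.inl ⟨i, by omega⟩) (Sum.inl ⟨l, by omega⟩) (Sum.inl ⟨k, by omega⟩) (Sum.inl ⟨j, by omega⟩)
  have hi' : i < m := by omega
  have hj' : j < m := by omega
  have hk' : k < m := by omega
  have hl' : l < m := by omega
  simp [pI_inl, pI_inr] at c1 c2
  simp only [A1, hX, e1, ex1, hi', hj', hk', hl', and_self, dif_pos]
  push_cast at c1 c2 ⊢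
  linear_combination (norm := abel) c1 + c2

include he hT hY in
lemma A2_manin0 (N : ℕ) (hN : N ≤ n) (t : ℕ) (i k j l : ℕ) (hi : i < N) (hk : k < N) (hj : j < N) (hl : l < N) :
    A2 Yf t i j * A2 Yf (t+1) k l - A2 Yf t k j * A2 Yf (t+1) i l + A2 Yf t i l * A2 Yf (t+1) k j
      - A2 Yf t k l * A2 Yf (t+1) i j = 0 := by
  have hYa := hY (m+n) (-(m : ℤ) + 1 + t)
  have hYb := hY (m+n) (-(m : ℤ) + 1 + (t+1 : ℕ))
  have e1 : T + ((-(m : ℤ) + 1 + (t : ℕ) : ℤ) : R) = T + ((-(m : ℤ) + 1 + (t+1 : ℕ) : ℤ) : R) - 1 := by push_cast; abel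
  rw [e1] at hYa
  have h := RTT_Y pI_or he (hTc hT _) hYb hYa
  have hi' : i < n := by omega
  have hj' : j < n := by omega
  have hk' : k < n := by omega
  have hl' : l < n := by omega
  have c1 := h ⟨Sum.inr ⟨j, hj'⟩, rI_lt _⟩ ⟨Sum.inr ⟨i, hi'⟩, rI_lt _⟩ ⟨Sum.inr ⟨l, hl'⟩, rI_lt _⟩ ⟨Sum.inr ⟨k, hk'⟩, rI_lt _⟩
  have c2 := h ⟨Sum.inr ⟨j, hj'⟩, rI_lt _⟩ ⟨Sum.inr ⟨k, hk'⟩, rI_lt _⟩ ⟨Sum.inr ⟨l, hl'⟩, rI_lt _⟩ ⟨Sum.inr ⟨i, hi'⟩, rI_lt _⟩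
  simp [pI_inl, pI_inr] at c1 c2
  norm_num at c1 c2
  simp only [A2, ex2, hi', hj', hk', hl', and_self, dif_pos]
  push_cast at c1 c2 ⊢
  linear_combination (norm := abel) c1 - c2

include he h2 hT hY in
lemma D1_step (N : ℕ) (hN : N < m) : cdet (N+1) (A1 e T) * Yf (N+1) (-(N : ℤ)) (Sum.inl ⟨N, hN⟩) (Sum.inl ⟨N, hN⟩) = cdet N (A1 e T) := by
  have h := cdet_last h2 (A1 e T) (A1_manin he hT (N+1) hN)
    (fun l : Fin (N+1) => Yf (N+1) (-(N : ℤ)) (Sum.inl ⟨l.1, by omega⟩) (Sum.inl ⟨N, hN⟩)) ?_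
  · exact h
  intro i
  have h1 := congrFun (congrFun (hY (N+1) (-(N : ℤ))).1 (Sum.inl ⟨i.1, by omega⟩)) (Sum.inl ⟨N, hN⟩)
  rw [Matrix.mul_apply, Matrix.one_apply, Fintype.sum_sum_type] at h1
  rw [Finset.sum_eq_zero (s := (Finset.univ : Finset (Fin n)))] at h1
  · rw [add_zero] at h1
    have e0 : ((Sum.inl ⟨i.1, by omega⟩ : Ind m n) = Sum.inl ⟨N, hN⟩) ↔ i = Fin.last N := by
      simp [Fin.ext_iff]
    rw [if_congr e0 rfl rfl] at h1
    rw [← h1]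
    symm
    have hle : N + 1 ≤ m := hN
    rw [← Finset.sum_subset (Finset.subset_univ (Finset.univ.map (Fin.castLEEmb hle)))]
    · rw [Finset.sum_map]
      refine Finset.sum_congr rfl fun l _ => ?_
      have a1 := i.2
      have a2 := l.2
      have a3 : i.1 < m := by omega
      have a4 : l.1 < m := by omega
      simp [A1, ex1, a3, a4, Xs, rI]
      have a5 : i.1 < m + n := by omega
      have a6 : l.1 < m + n := by omega
      have a7 : i.1 ≤ N := by omega
      have a8 : l.1 ≤ N := by omega
      simp [a1, a2, a5, a6, a7, a8, Fin.ext_iff]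
      rfl
    · intro x _ hx
      have : N + 1 ≤ x.1 := by
        by_contra hlt
        exact hx (Finset.mem_map.2 ⟨⟨x.1, by omega⟩, Finset.mem_univ _, rfl⟩)
      rw [Y_block1 (hY (N+1) (-(N : ℤ))) (Sum.inl x) _ this, mul_zero]
      simp [Fin.ext_iff]; omega
  · intro x _
    rw [Y_block1 (hY (N+1) (-(N : ℤ))) (Sum.inr x) _ (by simp [rI]; omega) (by simp), mul_zero]

include he h2 hT hY in
lemma D1_eq (N : ℕ) (hN : N ≤ m) :
    cdet N (A1 e T) = (List.ofFn fun k : Fin N => ga e T Yf (Sum.inl ⟨k.1, by omega⟩)).prod := by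
  induction N with
  | zero => simp [cdet]
  | succ N ih =>
    rw [List.ofFn_succ', List.concat_eq_append, List.prod_append, List.prod_singleton]
    simp only [Fin.val_castSucc, Fin.val_last]
    rw [← ih (by omega), ← D1_step he h2 hT hY N hN, mul_assoc]
    have := schur_d2 rI_inj (rfl : rI (Sum.inl ⟨N, hN⟩ : Ind m n) = N) (hY (N+1) (-(N : ℤ))) (hY N (-(N : ℤ)))
    have t2 : Yf (N+1) (-(N : ℤ)) (Sum.inl ⟨N, hN⟩) (Sum.inl ⟨N, hN⟩) * ga e T Yf (Sum.inl ⟨N, hN⟩) = 1 := this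
    rw [t2, mul_one]

def A2s (Yf : ℕ → ℤ → Matrix (Ind m n) (Ind m n) R) (j t i l : ℕ) : R := A2 Yf (j+t) (j+i) (j+l)

include he hT hY in
lemma A2_manin (N j : ℕ) (hN : j + N ≤ n) : Manin3 (A2s Yf j) N := by
  intro t ht i k c l hi hk hc hl
  exact A2_manin0 he hT hY n le_rfl (j+t) (j+i) (j+k) (j+c) (j+l) (by omega) (by omega) (by omega) (by omega)

include hY in
lemma row_eq (j : Fin n) (c : ℤ) (l : Ind m n) (hl : rI l < m + j.1 + 1) :
    (Yf (m + j.1 + 1) c * Xs pI rI e (m+n) (T + (c : R))) (Sum.inr j) l = if Sum.inr j = l then 1 else 0 := by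
  have h1 := congrFun (congrFun (hY (m + j.1 + 1) c).2 (Sum.inr j)) l
  rw [Matrix.one_apply] at h1
  rw [← h1, Matrix.mul_apply, Matrix.mul_apply]
  refine Finset.sum_congr rfl fun k _ => ?_
  by_cases hk : rI k < m + j.1 + 1
  · simp [Xs, hk, hl, rI_lt]
  · rw [Y_block2 (hY (m + j.1 + 1) c) _ k (by omega) (by rintro rfl; simp [rI] at hk), zero_mul, zero_mul]

include he h2 hT hY in
lemma D2_eq (N : ℕ) : ∀ (j : ℕ) (hN : j + N = n),
    cdet N (A2s Yf j) = (List.ofFn fun k : Fin N => ga e T Yf (Sum.inr ⟨j + k.1, by omega⟩)).prod := by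
  induction N with
  | zero => intro j hN; simp [cdet]
  | succ N ih =>
    intro j hN
    have hj : j < n := by omega
    have hstep := cdet_first h2 (A2s Yf j) (A2_manin he hT hY (N+1) j (by omega))
      (fun l => (Yf (m + j + 1) (-(m : ℤ) + 1 + j) * Xs pI rI e (m+n) (T + ((-(m : ℤ) + 1 + j : ℤ) : R)))
        (Sum.inr ⟨j, hj⟩) (Sum.inr ⟨j + l.1, by omega⟩)) (ga e T Yf (Sum.inr ⟨j, hj⟩)) ?_ ?_
    · rw [hstep, List.ofFn_succ, List.prod_cons]
      have e1 : (fun t i l => A2s Yf j (t+1) (i+1) (l+1)) = A2s Yf (j+1) := by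
        funext t i l
        simp only [A2s, add_assoc, add_comm 1]
      rw [e1, ih (j+1) (by omega)]
      congr 1
      congr 2
      funext k
      simp only [Fin.val_succ, add_assoc, add_comm 1]
    · have := row_eq hY ⟨j, hj⟩ (-(m : ℤ) + 1 + j) (Sum.inr ⟨j, hj⟩) (by simp [rI])
      simpa using this
    · intro i
      have hi := i.2
      have h1 := congrFun (congrFun (show (Yf (m + j + 1) (-(m : ℤ) + 1 + j) * Xs pI rI e (m+n) (T + ((-(m : ℤ) + 1 + j : ℤ) : R))) *
        Yf (m+n) (-(m : ℤ) + 1 + j) = Yf (m + j + 1) (-(m : ℤ) + 1 + j) by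
          rw [mul_assoc, (hY _ _).1, mul_one]) (Sum.inr ⟨j, hj⟩)) (Sum.inr ⟨j + i.1, by omega⟩)
      rw [Matrix.mul_apply, Fintype.sum_sum_type, Finset.sum_eq_zero (s := (Finset.univ : Finset (Fin m))), zero_add] at h1
      · have e0 : (if i = 0 then ga e T Yf (Sum.inr ⟨j, hj⟩) else 0) =
            Yf (m + j + 1) (-(m : ℤ) + 1 + j) (Sum.inr ⟨j, hj⟩) (Sum.inr ⟨j + i.1, by omega⟩) := by
          by_cases h0 : i = 0
          · subst h0; simp [ga]
          · have hpos : 0 < i.1 := Nat.pos_of_ne_zero (fun h => h0 (Fin.ext h))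
            have hne : (Sum.inr ⟨j, hj⟩ : Ind m n) ≠ Sum.inr ⟨j + i.1, by omega⟩ := by
              intro h
              have h' := Fin.mk.inj (Sum.inr.inj h)
              omega
            rw [if_neg h0, Y_block2 (hY _ _) _ _ (by change m + j + 1 ≤ m + (j + i.1); omega) hne]
        rw [e0, ← h1]
        let f : Fin (N+1) ↪ Fin n := ⟨fun l => ⟨j + l.1, by omega⟩, fun x y h => by simp [Fin.ext_iff] at h; exact Fin.ext h⟩
        rw [← Finset.sum_subset (Finset.subset_univ (Finset.univ.map f))]
        · rw [Finset.sum_map]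
          refine Finset.sum_congr rfl fun l _ => ?_
          have a1 : j + i.1 < n := by omega
          have a2 : j + l.1 < n := by omega
          simp [A2s, A2, ex2, a1, a2]
          rfl
        · intro x _ hx
          have hlt : x.1 < j := by
            by_contra hlt
            exact hx (Finset.mem_map.2 ⟨⟨x.1 - j, by omega⟩, Finset.mem_univ _, Fin.ext (show j + (x.1 - j) = x.1 by omega)⟩)
          have := row_eq hY ⟨j, hj⟩ (-(m : ℤ) + 1 + j) (Sum.inr x) (by simp [rI]; omega)
          rw [if_neg (by simp [Fin.ext_iff]; omega)] at this
          rw [this, zero_mul]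
      · intro x _
        have := row_eq hY ⟨j, hj⟩ (-(m : ℤ) + 1 + j) (Sum.inl x) (by simp [rI]; omega)
        rw [if_neg (by simp)] at this
        rw [this, zero_mul]

include he h2 hT hY in
lemma cap_eq : cdet m (A1 e T) * cdet n (A2 Yf) =
    (List.ofFn fun k : Fin (m+n) => ga e T Yf (finSumFinEquiv.symm k)).prod := by
  have e2 : A2s Yf 0 = A2 Yf := by funext t i l; simp [A2s]
  rw [D1_eq he h2 hT hY m le_rfl, ← e2, D2_eq he h2 hT hY n 0 (by omega), List.ofFn_add, List.prod_append]
  congr 1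
  · congr 2
    funext k
    rw [show (Fin.castLE (Nat.le_add_right m n) k) = Fin.castAdd n k from rfl, finSumFinEquiv_symm_apply_castAdd]
  · simp

end gauss

section tser
variable {A : Type} [Ring A]

lemma coeff_Tv_mul (x : TSer A) (k : ℤ) : (Tv * x).coeff k = x.coeff (k+1) := by
  have := HahnSeries.coeff_single_mul_add (r := (1:A)) (x := x) (a := k+1) (b := (-1:ℤ))
  simpa [Tv] using this

lemma coeff_mul_Tv (x : TSer A) (k : ℤ) : (x * Tv).coeff k = x.coeff (k+1) := by
  have := HahnSeries.coeff_mul_single_add (r := (1:A)) (x := x) (a := k+1) (b := (-1:ℤ))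
  simpa [Tv] using this

lemma Tv_comm (x : TSer A) : Commute Tv x := by
  ext k; rw [coeff_Tv_mul, coeff_mul_Tv]

variable {κ : Type} [DecidableEq κ] [Fintype κ]

def Gm (M : Matrix κ κ A) : Matrix κ κ (TSer A) := fun i j =>
  HahnSeries.ofSuppBddBelow (fun k : ℤ => if 1 ≤ k then ((-M) ^ (k-1).toNat) i j else 0)
    ⟨1, fun k hk => by
      by_contra h
      exact hk (if_neg h)⟩

lemma Gm_coeff (M : Matrix κ κ A) (i j : κ) (k : ℤ) :
    (Gm M i j).coeff k = if 1 ≤ k then ((-M) ^ (k-1).toNat) i j else 0 := rfl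

def Xm (M : Matrix κ κ A) : Matrix κ κ (TSer A) := fun i j => (if i = j then Tv else 0) + HahnSeries.C (M i j)

lemma Gm_inv (M : Matrix κ κ A) : IsInv (Xm M) (Gm M) := by
  constructor
  · ext i j k
    have h1 : (Xm M * Gm M) i j = Tv * Gm M i j + ∑ l, HahnSeries.C (M i l) * Gm M l j := by
      simp [Matrix.mul_apply, Xm, add_mul, Finset.sum_add_distrib, ite_mul]
    rw [h1, HahnSeries.coeff_add, coeff_Tv_mul, HahnSeries.coeff_sum]
    simp only [HahnSeries.C_apply, HahnSeries.coeff_single_zero_mul, Gm_coeff]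
    rcases lt_trichotomy k 0 with hk | rfl | hk
    · have a1 : ¬ (1 ≤ k + 1) := by omega
      have a2 : ¬ (1 ≤ k) := by omega
      have : ((1 : Matrix κ κ (TSer A)) i j).coeff k = 0 := by
        rw [Matrix.one_apply]; split_ifs
        · exact HahnSeries.coeff_one.trans (if_neg hk.ne)
        · rfl
      simp [a1, a2, this]
    · simp [Matrix.one_apply]
      split_ifs <;> simp
    · have a1 : (1 ≤ k + 1) := by omega
      have a2 : (1 ≤ k) := by omega
      have : ((1 : Matrix κ κ (TSer A)) i j).coeff k = 0 := by
        rw [Matrix.one_apply]; split_ifs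
        · exact HahnSeries.coeff_one.trans (if_neg hk.ne')
        · rfl
      obtain ⟨q, rfl⟩ : ∃ q : ℕ, k = q + 1 := ⟨(k-1).toNat, by omega⟩
      rw [if_pos a1, this]
      simp only [if_pos a2]
      rw [← Matrix.mul_apply, show ((q:ℤ) + 1 + 1 - 1).toNat = q + 1 by omega, show ((q:ℤ) + 1 - 1).toNat = q by omega,
        pow_succ', ← Matrix.add_apply]
      simp
  · ext i j k
    have h1 : (Gm M * Xm M) i j = Gm M i j * Tv + ∑ l, Gm M i l * HahnSeries.C (M l j) := by
      simp [Matrix.mul_apply, Xm, mul_add, Finset.sum_add_distrib, mul_ite]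
    rw [h1, HahnSeries.coeff_add, coeff_mul_Tv, HahnSeries.coeff_sum]
    simp only [HahnSeries.C_apply, HahnSeries.coeff_mul_single_zero, Gm_coeff]
    rcases lt_trichotomy k 0 with hk | rfl | hk
    · have a1 : ¬ (1 ≤ k + 1) := by omega
      have a2 : ¬ (1 ≤ k) := by omega
      have : ((1 : Matrix κ κ (TSer A)) i j).coeff k = 0 := by
        rw [Matrix.one_apply]; split_ifs
        · exact HahnSeries.coeff_one.trans (if_neg hk.ne)
        · rfl
      simp [a1, a2, this]
    · simp [Matrix.one_apply]
      split_ifs <;> simp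
    · have a1 : (1 ≤ k + 1) := by omega
      have a2 : (1 ≤ k) := by omega
      have : ((1 : Matrix κ κ (TSer A)) i j).coeff k = 0 := by
        rw [Matrix.one_apply]; split_ifs
        · exact HahnSeries.coeff_one.trans (if_neg hk.ne')
        · rfl
      obtain ⟨q, rfl⟩ : ∃ q : ℕ, k = q + 1 := ⟨(k-1).toNat, by omega⟩
      rw [if_pos a1, this]
      simp only [if_pos a2]
      rw [← Matrix.mul_apply, show ((q:ℤ) + 1 + 1 - 1).toNat = q + 1 by omega, show ((q:ℤ) + 1 - 1).toNat = q by omega,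
        pow_succ, ← Matrix.add_apply]
      simp

end tser

section inst
variable {A : Type} [Ring A] {m n : ℕ} (g : Ind m n → Ind m n → A)

def eC (i j : Ind m n) : TSer A := HahnSeries.C (g i j)

def YT (s : ℕ) (c : ℤ) : Matrix (Ind m n) (Ind m n) (TSer A) :=
  Gm (fun i j => (if i = j then (c : A) else 0) + (if rI i < s ∧ rI j < s then Emat pI g i j else 0))

lemma C_int (c : ℤ) : (HahnSeries.C (c : A) : TSer A) = (c : TSer A) := map_intCast (HahnSeries.C : A →+* TSer A) c

lemma YT_inv (s : ℕ) (c : ℤ) : IsInv (Xs pI rI (eC g) s (Tv + (c : TSer A))) (YT g s c) := by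
  have key : Xs pI rI (eC g) s (Tv + (c : TSer A)) = Xm (fun i j => (if i = j then (c : A) else 0) + (if rI i < s ∧ rI j < s then Emat pI g i j else 0)) := ?_
  · rw [key]; exact Gm_inv _
  refine Matrix.ext fun i j => ?_
  simp only [Xs, Xm, Emat, map_add, eC]
  rw [apply_ite (HahnSeries.C : A →+* TSer A), apply_ite (HahnSeries.C : A →+* TSer A), C_int, map_mul, map_pow, map_neg, map_one, map_zero]
  split_ifs <;> simp [add_assoc]

variable {g}
lemma eC_rel (hg : GLrel pI g) : GLrel pI (eC g) := by
  intro i j k l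
  have := congrArg (HahnSeries.C : A →+* TSer A) (hg i j k l)
  simp only [map_sub, map_mul, map_pow, map_neg, map_one, apply_ite (HahnSeries.C : A →+* TSer A), map_zero] at this
  exact this

variable [Algebra ℂ A]

lemma two_T (x y : TSer A) (h : x + x = y + y) : x = y := by
  rw [← two_smul ℂ x, ← two_smul ℂ y] at h
  exact (smul_right_injective _ (two_ne_zero (α := ℂ))) h

lemma Emat_smul (i j : Ind m n) : ((-1 : ℂ) ^ (pI i)) • g i j = (-1 : A) ^ (pI i) * g i j := by
  rcases pI_or i with h | h <;> simp [h]

lemma cap_T : capelli (scrE m n g) (-Tv) = cdet m (A1 (eC g) Tv) * cdet n (A2 (YT g)) := by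
  have hE : ∀ i j, scrE m n g i j = Emat pI (eC g) i j := by
    intro i j
    simp only [scrE, Emat, eC]
    rw [Emat_smul, map_mul, map_pow, map_neg, map_one]
  have hnat : ∀ t : ℕ, (((t : ℕ) : ℂ) • (1 : TSer A)) = (t : TSer A) := by
    intro t; rw [Nat.cast_smul_eq_nsmul, nsmul_one]
  unfold capelli cdet
  congr 1
  · refine Finset.sum_congr rfl fun σ _ => ?_
    congr 3
    funext t
    have h1 := (σ t).2
    have h2 := t.2
    simp only [A1, ex1, h1, h2, and_self, dif_pos, Xs, hE, hnat, rI_lt]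
    have : ((Sum.inl ⟨(σ t).1, h1⟩ : Ind m n) = Sum.inl ⟨t.1, h2⟩) ↔ σ t = t := by simp [Fin.ext_iff]
    rw [if_congr this rfl rfl]
    by_cases h : σ t = t
    · simp [h]; abel
    · simp [h]
  · refine Finset.sum_congr rfl fun σ _ => ?_
    congr 3
    funext t
    have h1 := (σ t).2
    have h2 := t.2
    simp only [A2, ex2, h1, h2, and_self, dif_pos]
    have key : (scrE m n g - (-Tv + ((((m : ℂ) - ((t : ℕ) : ℂ)) - 1) • (1 : TSer A))) •
            (1 : Matrix (Ind m n) (Ind m n) (TSer A))) = Xs pI rI (eC g) (m+n) (Tv + ((-(m : ℤ) + 1 + t.1 : ℤ) : TSer A)) := by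
      refine Matrix.ext fun i j => ?_
      have : ((((m : ℂ) - ((t : ℕ) : ℂ)) - 1) • (1 : TSer A)) = (m : TSer A) - (t.1 : TSer A) - 1 := by
        rw [sub_smul, sub_smul, hnat, hnat, one_smul]
      rw [Matrix.sub_apply, hE, Matrix.smul_apply, this]
      simp only [Xs, rI_lt, and_self, if_true, Matrix.one_apply]
      split_ifs
      · simp; abel
      · simp
    rw [key]
    obtain ⟨i1, i2⟩ := YT_inv g (m+n) (-(m : ℤ) + 1 + t.1)
    let U : (Matrix (Ind m n) (Ind m n) (TSer A))ˣ := ⟨_, _, i1, i2⟩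
    have := Ring.inverse_unit U
    change Ring.inverse (Xs _ _ _ _ _) = _ at this
    rw [this]
    rfl

lemma cap_comm (hg : GLrel pI g) (a b : Ind m n) (k : ℤ) :
    g a b * (capelli (scrE m n g) (-Tv)).coeff k = (capelli (scrE m n g) (-Tv)).coeff k * g a b := by
  have h := gC_all (eC_rel hg) two_T Tv_comm (YT_inv g) a b
  rw [← cap_eq (eC_rel hg) two_T Tv_comm (YT_inv g), ← cap_T] at h
  have := congrArg (fun x => HahnSeries.coeff x k) h.eq
  simpa only [eC, HahnSeries.C_apply, HahnSeries.coeff_mul_single_zero, HahnSeries.coeff_single_zero_mul] using this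

end inst

lemma neg_smul_pow {A : Type} [Ring A] [Algebra ℂ A] (N : ℕ) (x : A) : ((-1 : ℂ)^N) • x = (-1)^N * x := by
  rw [Algebra.smul_def, map_pow, map_neg, map_one]

lemma gen_rel {m n : ℕ} : GLrel pI (gen (pI : Ind m n → ℕ)) := by
  intro i j k l
  have := RingQuot.mkAlgHom_rel ℂ (glRel.basic (p := (pI : Ind m n → ℕ)) i j k l)
  rw [map_sub, map_sub, map_smul, map_smul, map_mul, map_mul, apply_ite (RingQuot.mkAlgHom ℂ (glRel (Ind m n) pI)),
    apply_ite (RingQuot.mkAlgHom ℂ (glRel (Ind m n) pI)), map_zero] at this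
  have hs : ∀ (N : ℕ) (x : UEA (Ind m n) pI), ((-1 : ℂ)^N) • x = (-1)^N * x := by
    intro N x
    exact neg_smul_pow N x
  rw [hs, hs] at this
  exact this

lemma UEA_induction {ι : Type} [DecidableEq ι] {p : ι → ℕ} (C : UEA ι p → Prop) (hc : ∀ r : ℂ, C (algebraMap ℂ _ r))
    (hg : ∀ i j, C (gen p i j)) (hm : ∀ a b, C a → C b → C (a * b)) (ha : ∀ a b, C a → C b → C (a + b)) (x : UEA ι p) : C x := by
  obtain ⟨y, rfl⟩ := RingQuot.mkAlgHom_surjective ℂ (glRel ι p) x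
  induction y using FreeAlgebra.induction with
  | grade0 r => rw [AlgHom.commutes]; exact hc r
  | grade1 x => exact hg x.1 x.2
  | mul a b h1 h2 => rw [map_mul]; exact hm _ _ h1 h2
  | add a b h1 h2 => rw [map_add]; exact ha _ _ h1 h2

lemma cap_center {m n : ℕ} (k : ℤ) : (capelli (scrE m n (gen pI)) (-Tv)).coeff k ∈
        Subalgebra.center ℂ (UEA (Ind m n) pI) := by
  rw [Subalgebra.mem_center_iff]
  intro b
  set z := (capelli (scrE m n (gen pI)) (-Tv)).coeff k
  induction b using UEA_induction with
  | hc r => exact Algebra.commutes r z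
  | hg i j => exact cap_comm gen_rel i j k
  | hm a b h1 h2 => rw [mul_assoc, h2, ← mul_assoc, h1, mul_assoc]
  | ha a b h1 h2 => rw [add_mul, h1, h2, mul_add]

section act
variable {R S : Type} [Ring R] [CommRing S] (K : Submodule R R) (f : S →+* R) (hf : ∀ s x, Commute (f s) x)

def Act (x : R) (s : S) : Prop := x - f s ∈ K

include hf
lemma Act_mul {x y : R} {s t : S} (h1 : Act K f x s) (h2 : Act K f y t) : Act K f (x * y) (s * t) := by
  have : x * y - f (s * t) = x * (y - f t) + f t * (x - f s) := by
    rw [mul_comm s t, map_mul, mul_sub, mul_sub, (hf t x).eq]; abel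
  unfold Act
  rw [this]
  exact K.add_mem (K.smul_mem x h2) (K.smul_mem (f t) h1)

omit hf in
lemma Act_one : Act K f 1 1 := by simp [Act]

lemma Act_list : ∀ {N : ℕ} (x : Fin N → R) (s : Fin N → S), (∀ i, Act K f (x i) (s i)) → Act K f (List.ofFn x).prod (List.ofFn s).prod
  | 0, _, _, _ => by simpa using Act_one K f
  | N+1, x, s, h => by
    rw [List.ofFn_succ, List.ofFn_succ, List.prod_cons, List.prod_cons]
    exact Act_mul K f hf (h 0) (Act_list _ _ fun i => h i.succ)

lemma Act_inv {x y : R} {s t : S} (hx : Act K f x s) (h : y * x = 1) (hst : s * t = 1) : Act K f y t := by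
  have e1 : y - f t = - (y * f t) * (x - f s) := by
    rw [neg_mul, mul_sub, mul_assoc, mul_assoc, ← map_mul, mul_comm t s, hst, map_one, mul_one, (hf t x).eq, ← mul_assoc, h, one_mul]
    abel
  unfold Act
  rw [e1]
  exact K.smul_mem _ hx

end act

section hw
variable {A : Type} [Ring A] [Algebra ℂ A]

omit [Algebra ℂ A] in
lemma iT_ex (x : A) : ∃ y : TSer A, (Tv + HahnSeries.C x) * y = 1 ∧ y * (Tv + HahnSeries.C x) = 1 := by
  obtain ⟨h1, h2⟩ := Gm_inv (fun _ _ : Unit => x)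
  refine ⟨Gm (fun _ _ : Unit => x) () (), ?_, ?_⟩
  · simpa [Matrix.mul_apply, Xm] using congrFun (congrFun h1 ()) ()
  · simpa [Matrix.mul_apply, Xm] using congrFun (congrFun h2 ()) ()

def mapS {B A : Type} [Ring B] [Ring A] (f : B →+* A) : TSer B →+* TSer A where
  toFun x := x.map f
  map_one' := by ext k; simp [HahnSeries.coeff_one]
  map_zero' := by ext k; simp
  map_mul' x y := HahnSeries.map_mul (f : B →ₙ+* A)
  map_add' x y := by ext k; simp

lemma mapS_coeff {B A : Type} [Ring B] [Ring A] (f : B →+* A) (x : TSer B) (k : ℤ) : (mapS f x).coeff k = f (x.coeff k) := rfl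

lemma mapS_single {B A : Type} [Ring B] [Ring A] (f : B →+* A) (a : B) (k : ℤ) :
    mapS f (HahnSeries.single k a) = HahnSeries.single k (f a) := by
  ext l
  rw [mapS_coeff, HahnSeries.coeff_single, HahnSeries.coeff_single]
  split_ifs <;> simp

lemma mapS_C {B A : Type} [Ring B] [Ring A] (f : B →+* A) (a : B) :
    mapS f (HahnSeries.C a) = HahnSeries.C (f a) := mapS_single f a 0

lemma mapS_Tv {B A : Type} [Ring B] [Ring A] (f : B →+* A) :
    mapS f Tv = Tv := by
  rw [Tv, mapS_single, map_one, Tv]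

def fS : TSer ℂ →+* TSer A := mapS (algebraMap ℂ A)

lemma fS_coeff (x : TSer ℂ) (k : ℤ) : (fS x : TSer A).coeff k = algebraMap ℂ A (x.coeff k) := rfl

lemma fS_comm (s : TSer ℂ) (x : TSer A) : Commute (fS s) x := by
  have h1 : (fS s : TSer A).support ⊆ s.support := by
    intro k hk hs
    exact hk (by rw [fS_coeff, hs, map_zero])
  ext k
  rw [HahnSeries.coeff_mul_left' s.isPWO_support h1, HahnSeries.coeff_mul_right' s.isPWO_support h1]
  refine Finset.sum_bij' (fun a _ => (a.2, a.1)) (fun a _ => (a.2, a.1)) ?_ ?_ ?_ ?_ ?_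
  · intro a ha; simp only [Finset.mem_antidiagonal] at ha ⊢; exact ⟨ha.2.1, ha.1, by rw [add_comm]; exact ha.2.2⟩
  · intro a ha; simp only [Finset.mem_antidiagonal] at ha ⊢; exact ⟨ha.2.1, ha.1, by rw [add_comm]; exact ha.2.2⟩
  · intro a _; rfl
  · intro a _; rfl
  · intro a _; rw [fS_coeff]; exact Algebra.commutes _ _

variable {V : Type} [AddCommGroup V] [Module ℂ V] (ρ : A →ₐ[ℂ] Module.End ℂ V) (v : V)

def Kil : Submodule (TSer A) (TSer A) where
  carrier := {x | ∀ k, ρ (x.coeff k) v = 0}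
  zero_mem' := by intro k; simp
  add_mem' := by intro a b ha hb k; simp [ha k, hb k]
  smul_mem' := by
    intro c x hx k
    rw [smul_eq_mul, HahnSeries.coeff_mul, map_sum, LinearMap.sum_apply]
    refine Finset.sum_eq_zero fun a _ => ?_
    rw [map_mul, Module.End.mul_apply, hx, map_zero]

lemma Kil_C (a : A) (h : ρ a v = 0) : HahnSeries.C a ∈ Kil ρ v := by
  intro k
  rw [HahnSeries.C_apply, HahnSeries.coeff_single]
  split_ifs
  · exact h
  · simp

variable {m n : ℕ} {g : Ind m n → Ind m n → A} (hg : GLrel pI g) (lam : Ind m n → ℂ)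
  (hw : ∀ i j : Ind m n, iltI i j → ρ (g i j) v = 0)
  (hwt : ∀ i : Ind m n, ρ (g i i) v = lam i • v)

lemma ilt_of_rI {i j : Ind m n} (h : rI i < rI j) : iltI i j := by
  rcases i with i | i <;> rcases j with j | j <;> simp [rI, iltI] at h ⊢ <;> omega

include hw hwt
lemma dS_act (c : ℤ) (W : Matrix (Ind m n) (Ind m n) (TSer A)) (b : Ind m n) :
    Act (Kil ρ v) fS (dS pI rI (eC g) (rI b) (Tv + (c : TSer A)) W b)
      (Tv + HahnSeries.C ((c : ℂ) + (-1)^(pI b) * lam b)) := by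
  unfold Act dS
  have e1 : Xs pI rI (eC g) (rI b + 1) (Tv + (c : TSer A)) b b = Tv + (c : TSer A) + (-1)^(pI b) * HahnSeries.C (g b b) := by
    simp [Xs, Emat, eC]
  have e2 : (fS (Tv + HahnSeries.C ((c : ℂ) + (-1)^(pI b) * lam b)) : TSer A) =
      Tv + (c : TSer A) + (-1)^(pI b) * HahnSeries.C (algebraMap ℂ A (lam b)) := by
    rw [fS, map_add, mapS_Tv, mapS_C, map_add, map_mul, map_add, map_mul, map_pow, map_neg, map_one, map_pow, map_neg, map_one, map_intCast, C_int]
    abel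
  rw [e1, e2]
  have e3 : ∀ a b c d : TSer A, a + b - c - (a + d) = (b - d) - c := by intros; abel
  rw [e3]
  refine Submodule.sub_mem _ ?_ (Submodule.sum_mem _ fun k _ => Submodule.smul_mem _ _ (Submodule.sum_mem _ fun i _ => Submodule.smul_mem _ _ ?_))
  · rw [← mul_sub, ← map_sub]
    refine Submodule.smul_mem _ _ (Kil_C _ _ _ ?_)
    rw [map_sub, AlgHom.commutes, LinearMap.sub_apply, hwt]
    simp
  · split_ifs with hi
    · have hne : i ≠ b := by rintro rfl; exact lt_irrefl _ hi
      simp only [Xs, if_neg hne, zero_add]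
      split_ifs
      · exact Submodule.smul_mem _ _ (Kil_C _ _ _ (hw _ _ (ilt_of_rI hi)))
      · exact Submodule.zero_mem _
    · exact Submodule.zero_mem _

def fb (lam : Ind m n → ℂ) : Ind m n → TSer ℂ :=
  Sum.elim (fun i => Tv + HahnSeries.C (lam (Sum.inl i) - (i.1 : ℂ)))
    (fun j => Ring.inverse (Tv + HahnSeries.C (-(m : ℂ) + 1 + j.1 - lam (Sum.inr j))))

lemma ga_act (b : Ind m n) : Act (Kil ρ v) fS (ga (eC g) Tv (YT g) b) (fb lam b) := by
  rcases b with i | j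
  · have := dS_act ρ v lam hw hwt (-(i.1 : ℤ)) (YT g i.1 (-(i.1 : ℤ))) (Sum.inl i)
    have e : ((-(i.1 : ℤ) : ℤ) : ℂ) + (-1)^(pI (Sum.inl i : Ind m n)) * lam (Sum.inl i) = lam (Sum.inl i) - (i.1 : ℂ) := by
      rw [pI_inl]; push_cast; ring
    rw [e] at this
    exact this
  · have := dS_act ρ v lam hw hwt (-(m : ℤ) + 1 + j.1) (YT g (m + j.1) (-(m : ℤ) + 1 + j.1)) (Sum.inr j)
    have e : ((-(m : ℤ) + 1 + j.1 : ℤ) : ℂ) + (-1)^(pI (Sum.inr j : Ind m n)) * lam (Sum.inr j) = -(m : ℂ) + 1 + j.1 - lam (Sum.inr j) := by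
      rw [pI_inr]; push_cast; ring
    rw [e] at this
    have h2 := schur_d2 rI_inj (rfl : rI (Sum.inr j : Ind m n) = m + j.1) (YT_inv g (m + j.1 + 1) (-(m : ℤ) + 1 + j.1)) (YT_inv g (m + j.1) (-(m : ℤ) + 1 + j.1))
    refine Act_inv _ _ fS_comm this h2 ?_
    apply Ring.mul_inverse_cancel
    obtain ⟨y, h1, h2⟩ := iT_ex (-(m : ℂ) + 1 + j.1 - lam (Sum.inr j))
    exact ⟨⟨_, y, h1, h2⟩, rfl⟩

include hg
lemma cap_act (k : ℤ) : ρ ((capelli (scrE m n g) (-Tv)).coeff k) v = ((∏ i, fb lam (Sum.inl i)) * ∏ j, fb lam (Sum.inr j)).coeff k • v := by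
  have h := Act_list (Kil ρ v) fS fS_comm (fun k : Fin (m+n) => ga (eC g) Tv (YT g) (finSumFinEquiv.symm k))
    (fun k => fb lam (finSumFinEquiv.symm k)) (fun i => ga_act ρ v lam hw hwt _)
  rw [← cap_eq (eC_rel hg) two_T Tv_comm (YT_inv g), ← cap_T, List.prod_ofFn, Equiv.prod_comp finSumFinEquiv.symm, Fintype.prod_sum_type] at h
  have := h k
  rw [HahnSeries.coeff_sub, map_sub, LinearMap.sub_apply, sub_eq_zero] at this
  rw [this, fS_coeff, AlgHom.commutes]
  rfl

end hw

section verma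
variable {m n : ℕ} (lam : Ind m n → ℂ)

def JV : Submodule (UEA (Ind m n) pI) (UEA (Ind m n) pI) :=
  Submodule.span _ ({x | ∃ i j : Ind m n, iltI i j ∧ x = gen pI i j} ∪
    {x | ∃ i : Ind m n, x = gen pI i i - algebraMap ℂ _ (lam i)})

def Ann {W : Type} [AddCommGroup W] [Module ℂ W] (ρW : UEA (Ind m n) pI →ₐ[ℂ] Module.End ℂ W) (w : W) :
    Submodule (UEA (Ind m n) pI) (UEA (Ind m n) pI) where
  carrier := {u | ρW u w = 0}
  zero_mem' := by simp
  add_mem' := by intro a b ha hb; simp only [Set.mem_ofPred_eq] at *; rw [map_add, LinearMap.add_apply, ha, hb, add_zero]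
  smul_mem' := by intro a b hb; simp only [Set.mem_ofPred_eq, smul_eq_mul] at *; rw [map_mul, Module.End.mul_apply, hb, map_zero]

lemma JV_le {W : Type} [AddCommGroup W] [Module ℂ W] (ρW : UEA (Ind m n) pI →ₐ[ℂ] Module.End ℂ W) (w : W)
    (hw : ∀ i j : Ind m n, iltI i j → ρW (gen pI i j) w = 0)
    (hwt : ∀ i : Ind m n, ρW (gen pI i i) w = lam i • w) : JV lam ≤ Ann ρW w := by
  refine Submodule.span_le.2 ?_
  rintro x (⟨i, j, hij, rfl⟩ | ⟨i, rfl⟩)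
  · exact hw i j hij
  · change ρW _ w = 0
    rw [map_sub, AlgHom.commutes, LinearMap.sub_apply, hwt]
    simp

lemma univ_V {W : Type} [AddCommGroup W] [Module ℂ W] (ρW : UEA (Ind m n) pI →ₐ[ℂ] Module.End ℂ W) (w : W)
    (hw : ∀ i j : Ind m n, iltI i j → ρW (gen pI i j) w = 0)
    (hwt : ∀ i : Ind m n, ρW (gen pI i i) w = lam i • w) :
    ∃ g : (UEA (Ind m n) pI ⧸ JV lam) →ₗ[ℂ] W, ∀ u, g (Submodule.Quotient.mk u) = ρW u w := by
  let f : UEA (Ind m n) pI →ₗ[ℂ] W := (LinearMap.applyₗ w).comp ρW.toLinearMap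
  have hf : (JV lam).restrictScalars ℂ ≤ LinearMap.ker f := fun x hx => JV_le lam ρW w hw hwt hx
  refine ⟨(Submodule.liftQ _ f hf).comp (Submodule.Quotient.restrictScalarsEquiv ℂ (JV lam)).symm.toLinearMap, fun u => ?_⟩
  rfl

lemma ls_mk (u y : UEA (Ind m n) pI) : (Algebra.lsmul ℂ ℂ (UEA (Ind m n) pI ⧸ JV lam) u) (Submodule.Quotient.mk y) =
    Submodule.Quotient.mk (u * y) := rfl

lemma verma_of {W : Type} [AddCommGroup W] [Module ℂ W] (ρW : UEA (Ind m n) pI →ₐ[ℂ] Module.End ℂ W) (w : W)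
    (hw : ∀ i j : Ind m n, iltI i j → ρW (gen pI i j) w = 0)
    (hwt : ∀ i : Ind m n, ρW (gen pI i i) w = lam i • w) (hne : w ≠ 0) : Nonempty (VermaM m n lam) := by
  refine ⟨{ L := UEA (Ind m n) pI ⧸ JV lam, ρ := Algebra.lsmul ℂ ℂ _, v := Submodule.Quotient.mk 1, v_ne := ?_, hw := ?_, hwt := ?_, gens := ?_, univ := ?_ }⟩
  · intro h
    obtain ⟨g, hg⟩ := univ_V lam ρW w hw hwt
    have := hg 1
    rw [h, map_zero, map_one] at this
    exact hne this.symm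
  · intro i j hij
    rw [ls_mk, Submodule.Quotient.mk_eq_zero, mul_one]
    exact Submodule.subset_span (Or.inl ⟨i, j, hij, rfl⟩)
  · intro i
    rw [ls_mk, ← Submodule.Quotient.mk_smul, Submodule.Quotient.eq, mul_one,
      ← Algebra.algebraMap_eq_smul_one]
    exact Submodule.subset_span (Or.inr ⟨i, rfl⟩)
  · intro N hN hv
    rw [eq_top_iff]
    rintro x -
    obtain ⟨u, rfl⟩ := Submodule.Quotient.mk_surjective _ x
    have := hN u _ hv
    rw [ls_mk, mul_one] at this
    exact this
  · intro W' _ _ ρ' w' h1 h2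
    obtain ⟨g, hg⟩ := univ_V lam ρ' w' h1 h2
    refine ⟨g, by rw [hg, map_one]; rfl, fun u x => ?_⟩
    obtain ⟨y, rfl⟩ := Submodule.Quotient.mk_surjective _ x
    rw [ls_mk, hg, hg, map_mul]
    rfl

end verma

section fock
variable {α : Type} [DecidableEq α] [Fintype α] (ω q : α → ℕ)

def JW (a : α) (x : α → ℤ) : ℂ := ∏ b, if ω b < ω a ∧ Odd (q a * q b) ∧ Odd (x b) then -1 else 1

omit [DecidableEq α] in
lemma JW_sq (a : α) (x : α → ℤ) : JW ω q a x * JW ω q a x = 1 := by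
  unfold JW
  rw [← Finset.prod_mul_distrib]
  refine Finset.prod_eq_one fun b _ => ?_
  split_ifs <;> simp

lemma JW_self (a : α) (x : α → ℤ) (k : ℤ) : JW ω q a (Function.update x a k) = JW ω q a x := by
  unfold JW
  refine Finset.prod_congr rfl fun b _ => ?_
  by_cases h : b = a
  · subst h; simp
  · rw [Function.update_of_ne h]

lemma JW_ne (a b : α) (x : α → ℤ) (ε : ℤ) (hε : Odd ε) :
    JW ω q a (Function.update x b (x b + ε)) = (if ω b < ω a ∧ Odd (q a * q b) then -1 else 1) * JW ω q a x := by
  unfold JW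
  rw [← Finset.mul_prod_erase Finset.univ _ (Finset.mem_univ b), ← Finset.mul_prod_erase Finset.univ
    (fun b => if ω b < ω a ∧ Odd (q a * q b) ∧ Odd (x b) then (-1 : ℂ) else 1) (Finset.mem_univ b), ← mul_assoc]
  congr 1
  · rw [Function.update_self]
    have h1 : Odd (x b + ε) ↔ ¬ Odd (x b) := by
      rw [Int.odd_add, Int.not_odd_iff_even]
      constructor
      · intro h; by_contra h'
        rw [Int.not_even_iff_odd] at h'
        exact (Int.not_even_iff_odd.2 hε) (h.1 h')
      · intro h
        constructor
        · intro h'; exact absurd h (Int.not_even_iff_odd.2 h')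
        · intro h'; exact absurd h' (Int.not_even_iff_odd.2 hε)
    simp only [h1]
    by_cases h2 : ω b < ω a <;> by_cases h3 : Odd (q a * q b) <;> by_cases h4 : Odd (x b) <;> simp [h2, h3, h4]
  · refine Finset.prod_congr rfl fun c hc => ?_
    rw [Function.update_of_ne (Finset.ne_of_mem_erase hc)]

def sh (a : α) (f : ℤ → ℂ) (ε : ℤ) : Module.End ℂ ((α → ℤ) →₀ ℂ) :=
  mkOp fun x => Finsupp.single (Function.update x a (x a + ε)) (JW ω q a x * f (x a))

lemma sh_single (a : α) (f : ℤ → ℂ) (ε : ℤ) (x : α → ℤ) (c : ℂ) :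
    sh ω q a f ε (Finsupp.single x c) = Finsupp.single (Function.update x a (x a + ε)) (c * (JW ω q a x * f (x a))) := by
  have : c • (Finsupp.single (Function.update x a (x a + ε)) (JW ω q a x * f (x a)) : (α → ℤ) →₀ ℂ) = _ := Finsupp.smul_single _ _ _
  rw [smul_eq_mul] at this
  rw [← this]
  simp only [sh, mkOp, Finsupp.lsum_single, LinearMap.toSpanSingleton_apply]

lemma npow_apply {M : Type} [AddCommGroup M] [Module ℂ M] (N : ℕ) (f : Module.End ℂ M) (x : M) :
    ((-1 : Module.End ℂ M)^N * f) x = (-1 : ℂ)^N • f x := by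
  rcases N.even_or_odd with h | h <;> simp [h.neg_one_pow]

lemma sh_comm (hω : Function.Injective ω) {a b : α} (hab : a ≠ b) (f g : ℤ → ℂ) {ε ε' : ℤ} (hε : Odd ε) (hε' : Odd ε') :
    sh ω q a f ε * sh ω q b g ε' = (-1)^(q a * q b) * (sh ω q b g ε' * sh ω q a f ε) := by
  refine Finsupp.lhom_ext fun x c => ?_
  rw [npow_apply, Module.End.mul_apply, Module.End.mul_apply, sh_single, sh_single, sh_single, sh_single, JW_ne _ _ _ _ _ _ hε,
    JW_ne _ _ _ _ _ _ hε', Function.update_of_ne hab, Function.update_of_ne hab.symm, Function.update_comm hab, Finsupp.smul_single]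
  congr 1
  have : ω a ≠ ω b := fun h => hab (hω h)
  rcases Nat.even_or_odd (q a * q b) with h | h
  · have h' : ¬ Odd (q a * q b) := Nat.not_odd_iff_even.2 h
    have h'' : ¬ Odd (q b * q a) := by rwa [mul_comm]
    simp only [h.neg_one_pow, h', h'', and_false, if_false, smul_eq_mul]
    ring
  · have h'' : Odd (q b * q a) := by rwa [mul_comm]
    simp only [h.neg_one_pow, h, h'', and_true, smul_eq_mul]
    rcases lt_or_gt_of_ne this with h1 | h1
    · simp only [h1, h1.not_gt, if_true, if_false]; ring
    · simp only [h1, h1.not_gt, if_true, if_false]; ring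

lemma sh_same (a : α) (f g : ℤ → ℂ) (ε ε' : ℤ) (x : α → ℤ) (c : ℂ) :
    (sh ω q a f ε * sh ω q a g ε') (Finsupp.single x c) = Finsupp.single (Function.update x a (x a + ε' + ε)) (c * (g (x a) * f (x a + ε'))) := by
  rw [Module.End.mul_apply, sh_single, sh_single, JW_self, Function.update_self, Function.update_idem]
  congr 1
  linear_combination (c * g (x a) * f (x a + ε')) * JW_sq ω q a x

variable (τ d : α → ℤ → ℂ)

def Ph (a : α) := sh ω q a (τ a) 1
def Ps (a : α) := sh ω q a (d a) (-1)

variable (hω : Function.Injective ω) (h1 : ∀ a k, Odd (q a) → τ a k * τ a (k+1) = 0)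
  (h2 : ∀ a k, Odd (q a) → d a k * d a (k-1) = 0)
  (h3 : ∀ a k, τ a k * d a (k+1) - (-1)^(q a) * (d a k * τ a (k-1)) = 1)

lemma even_case {R : Type} [Ring R] {N : ℕ} (h : Even N) (x : R) : (-1)^N * x = x := by
  rw [h.neg_one_pow, one_mul]

lemma sq_par (N : ℕ) : (Odd N ∧ Odd (N*N)) ∨ (Even N ∧ Even (N * N)) := by
  rcases N.even_or_odd with h | h
  · exact Or.inr ⟨h, h.mul_left _⟩
  · exact Or.inl ⟨h, h.mul h⟩

include hω
include h1 in
lemma PhPh (a b : α) : Ph ω q τ a * Ph ω q τ b = (-1)^(q a * q b) * (Ph ω q τ b * Ph ω q τ a) := by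
  by_cases h : a = b
  · subst h
    rcases sq_par (q a) with ⟨h, h'⟩ | ⟨h, h'⟩
    · have : Ph ω q τ a * Ph ω q τ a = 0 := by
        refine Finsupp.lhom_ext fun x c => ?_
        rw [Ph, sh_same, h1 a _ h, mul_zero, Finsupp.single_zero]; rfl
      rw [this, mul_zero]
    · exact (even_case (R := Module.End ℂ ((α → ℤ) →₀ ℂ)) h' _).symm
  · exact sh_comm ω q hω h _ _ (by decide) (by decide)

include h2 in
lemma PsPs (a b : α) : Ps ω q d a * Ps ω q d b = (-1)^(q a * q b) * (Ps ω q d b * Ps ω q d a) := by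
  by_cases h : a = b
  · subst h
    rcases sq_par (q a) with ⟨h, h'⟩ | ⟨h, h'⟩
    · have : Ps ω q d a * Ps ω q d a = 0 := by
        refine Finsupp.lhom_ext fun x c => ?_
        rw [Ps, sh_same, ← sub_eq_add_neg (x a), h2 a _ h, mul_zero, Finsupp.single_zero]; rfl
      rw [this, mul_zero]
    · exact (even_case (R := Module.End ℂ ((α → ℤ) →₀ ℂ)) h' _).symm
  · exact sh_comm ω q hω h _ _ (by decide) (by decide)

include h3 in
lemma PsPh (a b : α) : Ps ω q d a * Ph ω q τ b = (if a = b then 1 else 0) + (-1)^(q a * q b) * (Ph ω q τ b * Ps ω q d a) := by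
  by_cases h : a = b
  · subst h
    rw [if_pos rfl]
    refine Finsupp.lhom_ext fun x c => ?_
    rw [LinearMap.add_apply, npow_apply, Ph, Ps, sh_same, sh_same, add_neg_cancel_right, neg_add_cancel_right, Function.update_eq_self,
      Module.End.one_apply, Finsupp.smul_single, ← Finsupp.single_add, ← sub_eq_add_neg]
    congr 1
    have h4 : (-1 : ℂ)^(q a * q a) = (-1)^(q a) := by
      rcases sq_par (q a) with ⟨h, h'⟩ | ⟨h, h'⟩ <;> rw [h.neg_one_pow, h'.neg_one_pow]
    rw [h4, smul_eq_mul]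
    linear_combination c * h3 a (x a)
  · rw [if_neg h, zero_add]
    exact sh_comm ω q hω h _ _ (by decide) (by decide)

end fock

section fockgl
variable {R ι : Type} [Ring R] [DecidableEq ι] [Fintype ι] (p : ι → ℕ) (φ ψ : ι × ι → R)
  (h1 : ∀ a b, φ a * φ b = (-1)^((p a.1 + p a.2) * (p b.1 + p b.2)) * (φ b * φ a))
  (h2 : ∀ a b, ψ a * ψ b = (-1)^((p a.1 + p a.2) * (p b.1 + p b.2)) * (ψ b * ψ a))
  (h3 : ∀ a b, ψ a * φ b = (if a = b then 1 else 0) + (-1)^((p a.1 + p a.2) * (p b.1 + p b.2)) * (φ b * ψ a))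

def EF (i j : ι) : R := ∑ k, φ (i, k) * ψ (j, k)

include h3 in
lemma EF_mul (i j k l : ι) : EF φ ψ i j * EF φ ψ k l = (if j = k then EF φ ψ i l else 0) +
    ∑ s, ∑ t, (-1)^((p j + p s) * (p k + p t)) * (φ (i, s) * φ (k, t) * (ψ (j, s) * ψ (l, t))) := by
  have : (if j = k then EF φ ψ i l else 0) = ∑ s, ∑ t, if j = k ∧ s = t then φ (i, s) * ψ (l, t) else 0 := by
    by_cases h : j = k
    · simp [h, EF]
    · simp [h]
  rw [this, ← Finset.sum_add_distrib, EF, EF, Finset.sum_mul_sum]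
  refine Finset.sum_congr rfl fun s _ => ?_
  rw [← Finset.sum_add_distrib]
  refine Finset.sum_congr rfl fun t _ => ?_
  have e1 : φ (i, s) * ψ (j, s) * (φ (k, t) * ψ (l, t)) = φ (i, s) * (ψ (j, s) * φ (k, t)) * ψ (l, t) := by noncomm_ring
  rw [e1, h3, mul_add, add_mul]
  congr 1
  · by_cases h : j = k ∧ s = t
    · simp [h]
    · rw [if_neg h, if_neg (by rw [Prod.mk.injEq]; exact h)]; simp
  · simp only [← mul_assoc, sgn_comm]

include h1 h2 h3 in
lemma EF_rel : GLrel p (EF φ ψ) := by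
  intro i j k l
  rw [EF_mul p φ ψ h3, EF_mul p φ ψ h3, Finset.sum_comm (γ := ι)]
  have key : ∀ s t : ι, (-1 : R)^((p j + p s) * (p k + p t)) * (φ (i, s) * φ (k, t) * (ψ (j, s) * ψ (l, t))) =
      (-1 : R) ^ ((p i + p j) * (p k + p l)) * ((-1)^((p l + p t) * (p i + p s)) * (φ (k, t) * φ (i, s) * (ψ (l, t) * ψ (j, s)))) := by
    intro s t
    rw [h1 (i, s) (k, t), h2 (j, s) (l, t)]
    set P := φ (k, t) * φ (i, s)
    set Q := ψ (l, t) * ψ (j, s)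
    have e : ∀ a b c : ℕ, (-1 : R)^a * ((-1)^b * P * ((-1)^c * Q)) = (-1)^(a + b + c) * (P * Q) := by
      intro a b c
      rw [pow_add, pow_add]
      rcases a.even_or_odd with h | h <;> rcases b.even_or_odd with h' | h' <;> rcases c.even_or_odd with h'' | h'' <;>
        simp [h.neg_one_pow, h'.neg_one_pow, h''.neg_one_pow]
    have e' : ∀ a b : ℕ, (-1 : R)^a * ((-1)^b * (P * Q)) = (-1)^(a + b) * (P * Q) := by
      intro a b
      rw [pow_add, mul_assoc ((-1 : R)^a)]
    rw [e, e']
    congr 1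
    have e2 : ∀ a b : ℕ, Even (a + b) → (-1 : R)^a = (-1)^b := by
      intro a b h
      rcases Nat.even_or_odd a with h1 | h1
      · rw [h1.neg_one_pow, ((Nat.even_add.1 h).1 h1).neg_one_pow]
      · have : Odd b := by
          rw [← Nat.not_even_iff_odd] at h1 ⊢
          exact fun h' => h1 ((Nat.even_add.1 h).2 h')
        rw [h1.neg_one_pow, this.neg_one_pow]
    refine e2 _ _ ⟨(p i + p j) * (p k + p l) + (p i + p j) * p t + p s * (p k + p l) + 2 * p s * p t, ?_⟩
    ring
  simp only [key, ← Finset.mul_sum]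
  rw [mul_add ((-1 : R)^_)]
  abel
end fockgl

section vex
variable {m n : ℕ}

def oM (a : Ind m n × Ind m n) : ℕ := rI a.1 * (m + n) + rI a.2
def qM (a : Ind m n × Ind m n) : ℕ := pI a.1 + pI a.2

lemma oM_inj : Function.Injective (oM (m := m) (n := n)) := by
  rintro ⟨a, b⟩ ⟨c, d⟩ h
  simp only [oM] at h
  have hb := rI_lt b
  have hd := rI_lt d
  have h1 : rI a = rI c := by
    have h2 := congrArg (fun x => x / (m+n)) h
    rwa [mul_comm, Nat.mul_add_div (by omega), Nat.div_eq_of_lt hb, mul_comm, Nat.mul_add_div (by omega), Nat.div_eq_of_lt hd] at h2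
  have h2 : rI b = rI d := by rw [h1] at h; omega
  rw [rI_inj h1, rI_inj h2]

def tM (a : Ind m n × Ind m n) (k : ℤ) : ℂ :=
  if Odd (qM a) then (if Even k then 1 else 0) else if rI a.1 < rI a.2 then (if k = -1 then 0 else 1) else 1
def dM (c : Ind m n → ℂ) (a : Ind m n × Ind m n) (k : ℤ) : ℂ :=
  if Odd (qM a) then (if Even k then 0 else 1) else k + (if a.1 = a.2 then c a.1 else 0)

lemma tM1 (a : Ind m n × Ind m n) (k : ℤ) (h : Odd (qM a)) : tM a k * tM a (k+1) = 0 := by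
  simp only [tM, h, if_true]
  by_cases hk : Even k
  · have : ¬ Even (k+1) := by rw [Int.even_add_one]; simpa using hk
    simp [this]
  · simp [hk]

lemma dM1 (c : Ind m n → ℂ) (a : Ind m n × Ind m n) (k : ℤ) (h : Odd (qM a)) : dM c a k * dM c a (k-1) = 0 := by
  simp only [dM, h, if_true]
  by_cases hk : Even k
  · simp [hk]
  · have : Even (k-1) := by rw [Int.even_sub_one]; exact hk
    simp [this]

lemma tdM (c : Ind m n → ℂ) (a : Ind m n × Ind m n) (k : ℤ) :
    tM a k * dM c a (k+1) - (-1)^(qM a) * (dM c a k * tM a (k-1)) = 1 := by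
  by_cases h : Odd (qM a)
  · simp only [tM, dM, h, if_true, h.neg_one_pow]
    by_cases hk : Even k
    · have : ¬ Even (k+1) := by rw [Int.even_add_one]; simpa using hk
      simp [this, hk]
    · have : Even (k-1) := by rw [Int.even_sub_one]; exact hk
      simp [this, hk]
  · have h' := Nat.not_odd_iff_even.1 h
    simp only [tM, dM, h, if_false, h'.neg_one_pow]
    by_cases h1 : rI a.1 < rI a.2
    · have h2 : ¬ (a.1 = a.2) := by intro h; rw [h] at h1; exact lt_irrefl _ h1
      simp only [h1, h2, if_true, if_false]
      by_cases h3 : k = -1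
      · subst h3; norm_num
      · by_cases h4 : k = 0
        · subst h4; norm_num
        · have h5 : ¬ (k - 1 = -1) := by omega
          simp [h3, h5]
    · simp only [h1, if_false]
      push_cast; ring

def x0 (a : Ind m n × Ind m n) : ℤ := if rI a.1 < rI a.2 then (if Odd (qM a) then 1 else -1) else 0

def EM (c : Ind m n → ℂ) : Ind m n → Ind m n → Module.End ℂ ((Ind m n × Ind m n → ℤ) →₀ ℂ) :=
  EF (Ph oM qM tM) (Ps oM qM (dM c))

lemma EM_rel (c : Ind m n → ℂ) : GLrel pI (EM c) :=
  EF_rel pI _ _ (PhPh oM qM tM oM_inj tM1) (PsPs oM qM (dM c) oM_inj (dM1 c)) (PsPh oM qM tM (dM c) oM_inj (tdM c))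

lemma EM_hw (c : Ind m n → ℂ) (i j : Ind m n) (h : iltI i j) : EM c i j (Finsupp.single x0 1) = 0 := by
  have hij : rI i < rI j := by
    rcases i with i | i <;> rcases j with j | j <;> simp [rI, iltI] at h ⊢ <;> omega
  rw [EM, EF, LinearMap.sum_apply]
  refine Finset.sum_eq_zero fun k _ => ?_
  rw [Module.End.mul_apply, Ps, Ph, sh_single]
  by_cases hk : rI k < rI j
  · have h1 : ¬ (rI j < rI k) := by omega
    have h2 : ¬ (j = k) := by rintro rfl; exact lt_irrefl _ hk
    have : dM c (j, k) (x0 (j, k)) = 0 := by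
      simp only [dM, x0, h1, h2, if_false]
      split_ifs <;> simp at *
    rw [this, mul_zero, mul_zero, Finsupp.single_zero, map_zero]
  · have h1 : rI i < rI k := by omega
    have hne : (i, k) ≠ (j, k) := by
      intro h; rw [(Prod.mk.inj h).1] at hij; exact lt_irrefl _ hij
    have : tM (i, k) (x0 (i, k)) = 0 := by
      by_cases h2 : Odd (qM (i, k)) <;> simp [tM, x0, h1, h2]
    rw [sh_single, Function.update_of_ne hne, this, mul_zero, mul_zero, Finsupp.single_zero]

lemma EM_wt (c : Ind m n → ℂ) (i : Ind m n) : EM c i i (Finsupp.single x0 1) =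
    (c i + ∑ k, if rI i < rI k then (if Odd (qM (i, k)) then 1 else -1) else 0) • Finsupp.single x0 1 := by
  have : c i = ∑ k, if i = k then c i else 0 := by simp
  rw [this, ← Finset.sum_add_distrib, EM, EF, LinearMap.sum_apply, Finset.sum_smul]
  refine Finset.sum_congr rfl fun k _ => ?_
  rw [Ph, Ps, sh_same, neg_add_cancel_right, Function.update_eq_self, Finsupp.smul_single, smul_eq_mul, mul_one, one_mul]
  congr 1
  by_cases hik : i = k
  · subst hik
    have hq : ¬ Odd (qM (i, i)) := by simp [qM]
    simp [dM, tM, x0, hq]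
  · by_cases h1 : rI i < rI k
    · by_cases h2 : Odd (qM (i, k))
      · simp [dM, tM, x0, h1, h2, hik]
      · simp [dM, tM, x0, h1, h2, hik]
    · by_cases h2 : Odd (qM (i, k))
      · simp [dM, tM, x0, h1, h2, hik]
      · simp [dM, tM, x0, h1, h2, hik]

lemma rep_of {V : Type} [AddCommGroup V] [Module ℂ V] (E : Ind m n → Ind m n → Module.End ℂ V) (hE : GLrel pI E) :
    ∃ ρ : UEA (Ind m n) pI →ₐ[ℂ] Module.End ℂ V, ∀ i j, ρ (gen pI i j) = E i j := by
  refine ⟨RingQuot.liftAlgHom ℂ ⟨FreeAlgebra.lift ℂ (fun a : Ind m n × Ind m n => E a.1 a.2), ?_⟩, fun i j => ?_⟩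
  · rintro _ _ ⟨i, j, k, l⟩
    rw [map_sub, map_sub, map_smul, map_smul, map_mul, map_mul, apply_ite (FreeAlgebra.lift ℂ _), apply_ite (FreeAlgebra.lift ℂ _), map_zero]
    simp only [FreeAlgebra.lift_ι_apply]
    have := hE i j k l
    rw [neg_smul_pow, neg_smul_pow]
    exact this
  · rw [gen, RingQuot.liftAlgHom_mkAlgHom_apply, FreeAlgebra.lift_ι_apply]

lemma verma_ex (lam : Ind m n → ℂ) : Nonempty (VermaM m n lam) := by
  let c : Ind m n → ℂ := fun i => lam i - ∑ k, if rI i < rI k then (if Odd (qM (i, k)) then 1 else -1) else 0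
  obtain ⟨ρ, hρ⟩ := rep_of (EM c) (EM_rel c)
  refine verma_of lam ρ (Finsupp.single x0 1) (fun i j h => ?_) (fun i => ?_) ?_
  · rw [hρ]; exact EM_hw c i j h
  · rw [hρ, EM_wt]; simp [c]
  · simp

lemma Tinv_unit {A : Type} [Ring A] (x : A) : IsUnit (Tv + HahnSeries.C x) := by
  obtain ⟨y, h1, h2⟩ := iT_ex x
  exact ⟨⟨_, y, h1, h2⟩, rfl⟩

lemma inv_map {A B : Type} [Ring A] [Ring B] (f : A →+* B) {x : A} (hx : IsUnit x) :
    f (Ring.inverse x) = Ring.inverse (f x) := by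
  obtain ⟨u, rfl⟩ := hx
  rw [Ring.inverse_unit]
  exact (Ring.inverse_unit (Units.map f.toMonoidHom u)).symm

lemma final_lem
    (χs : Subalgebra.center ℂ (UEA (Ind m n) pI) →ₐ[ℂ] MvPolynomial (Ind m n) ℂ)
    (hχs : ∀ (z : Subalgebra.center ℂ (UEA (Ind m n) pI)) (lam : Ind m n → ℂ)
      (V : VermaM m n lam) (x : V.L),
      V.ρ (z : UEA (Ind m n) pI) x =
        (MvPolynomial.eval (fun i => lam i + rhoS (m := m) (n := n) i) (χs z)) • x) :
    ∀ k : ℤ, ∃ h : (capelli (scrE m n (gen pI)) (-Tv)).coeff k ∈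
        Subalgebra.center ℂ (UEA (Ind m n) pI),
      χs ⟨(capelli (scrE m n (gen pI)) (-Tv)).coeff k, h⟩ =
        (((∏ i : Fin m, (Tv + HahnSeries.C
            (MvPolynomial.X (Sum.inl i) - MvPolynomial.C ((m : ℂ))))) *
          ∏ j : Fin n, Ring.inverse (Tv - HahnSeries.C
            (MvPolynomial.X (Sum.inr j) + MvPolynomial.C ((m : ℂ)))) :
          TSer (MvPolynomial (Ind m n) ℂ))).coeff k := by
  intro k
  refine ⟨cap_center k, ?_⟩
  refine MvPolynomial.funext fun x => ?_
  let lam : Ind m n → ℂ := fun i => x i - rhoS i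
  have hx : (fun i => lam i + rhoS (m := m) (n := n) i) = x := by funext i; simp [lam]
  obtain ⟨V⟩ := verma_ex lam
  have h1 := hχs ⟨_, cap_center k⟩ lam V V.v
  rw [hx] at h1
  have h2 := cap_act V.ρ V.v gen_rel lam V.hw V.hwt k
  have h3 := h1.symm.trans h2
  have h4 := smul_left_injective ℂ V.v_ne h3
  refine h4.trans ?_
  rw [← mapS_coeff (MvPolynomial.eval x) _ k, map_mul, map_prod, map_prod]
  congr 2
  · refine Finset.prod_congr rfl fun i _ => ?_
    rw [map_add, mapS_Tv, mapS_C]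
    simp only [fb, Sum.elim_inl, lam, rhoS, map_sub, MvPolynomial.eval_X, MvPolynomial.eval_C]
    congr 1
    rw [← map_sub, ← map_sub, ← map_sub, ← map_sub]
    congr 1
    ring
  · refine Finset.prod_congr rfl fun j _ => ?_
    rw [sub_eq_add_neg, ← map_neg, inv_map _ (Tinv_unit _), map_add, mapS_Tv, mapS_C]
    simp only [fb, Sum.elim_inr, lam, rhoS, MvPolynomial.eval_X, MvPolynomial.eval_C, map_neg (MvPolynomial.eval x), map_add (MvPolynomial.eval x)]
    congr 3
    ring

end vex


/-- Proposition 5.3.  The image of the Capelli Berezinian under the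
Harish-Chandra homomorphism:
`χ_{m|n}(C_{m|n}(−T)) = (T+ℓ_1−m)⋯(T+ℓ_m−m)·(T−ℓ_{1̄}−m)^{−1}⋯(T−ℓ_{n̄}−m)^{−1}`,
as an identity of Laurent series (coefficientwise; in particular all coefficients of
`C_{m|n}(−T)` are central). -/
theorem stmt12 (m n : ℕ)
    (χs : Subalgebra.center ℂ (UEA (Ind m n) pI) →ₐ[ℂ] MvPolynomial (Ind m n) ℂ)
    (hχs : ∀ (z : Subalgebra.center ℂ (UEA (Ind m n) pI)) (lam : Ind m n → ℂ)
      (V : VermaM m n lam) (x : V.L),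
      V.ρ (z : UEA (Ind m n) pI) x =
        (MvPolynomial.eval (fun i => lam i + rhoS (m := m) (n := n) i) (χs z)) • x) :
    ∀ k : ℤ, ∃ h : (capelli (scrE m n (gen pI)) (-Tv)).coeff k ∈
        Subalgebra.center ℂ (UEA (Ind m n) pI),
      χs ⟨(capelli (scrE m n (gen pI)) (-Tv)).coeff k, h⟩ =
        (((∏ i : Fin m, (Tv + HahnSeries.C
            (MvPolynomial.X (Sum.inl i) - MvPolynomial.C ((m : ℂ))))) *
          ∏ j : Fin n, Ring.inverse (Tv - HahnSeries.C
            (MvPolynomial.X (Sum.inr j) + MvPolynomial.C ((m : ℂ)))) :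
          TSer (MvPolynomial (Ind m n) ℂ))).coeff k := by
  exact final_lem χs hχs
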